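/- There exists an absolute constant C > 0 such that for every C₀ ≥ 1 there exists ε₀ > 0 with the following property: for every R ≥ 1, if ε := ‖⟨x⟩^{1+N/2} f‖_{H^{N+2}} + ‖⟨x⟩^{1+N/2} g‖_{H^{N+1}} ≤ ε₀ and sup_{t ≥ 1} t^{1/2} sup_{x ∈ S_t^R} |u(t,x)| ≤ 2 C₀ ε, then for all t ≥ 1: ‖ ⟨·⟩^{-2} χ_{S_t^R} u₁(t,·) ‖_{L²(ℝ)} ≤ C (2 C₀ ε)³ t^{-1/2} and ‖ ⟨·⟩^{-2} χ_{S_t^R} ∂_x u₁(t,·) ‖_{L²(ℝ)} ≤ C (2 C₀ ε)³ t^{-3/2}. -/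

import Mathlib

open MeasureTheory

/-- Japanese bracket `⟨x⟩ = (1+x²)^{1/2}`. -/
noncomputable def jap (x : ℝ) : ℝ := Real.sqrt (1 + x ^ 2)

/-- Sobolev norm `‖h‖_{H^k} = (Σ_{j≤k} ‖h^{(j)}‖_{L²}²)^{1/2}`. -/
noncomputable def HNorm (h : ℝ → ℝ) (k : ℕ) : ℝ :=
  Real.sqrt (∑ j ∈ Finset.range (k + 1), ∫ x : ℝ, (iteratedDeriv j h x) ^ 2)

/-- Partial derivative in the first (time) variable. -/
noncomputable def pt (u : ℝ → ℝ → ℝ) (t x : ℝ) : ℝ := deriv (fun s => u s x) t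

/-- Partial derivative in the second (space) variable. -/
noncomputable def px (u : ℝ → ℝ → ℝ) (t x : ℝ) : ℝ := deriv (fun y => u t y) x

/-- The weighted Sobolev norm of the initial data:
`ε = ‖⟨x⟩^{1+N/2} f‖_{H^{N+2}} + ‖⟨x⟩^{1+N/2} g‖_{H^{N+1}}`. -/
noncomputable def epsN (N : ℕ) (f g : ℝ → ℝ) : ℝ :=
  HNorm (fun x => jap x ^ (1 + (N : ℝ) / 2) * f x) (N + 2)
    + HNorm (fun x => jap x ^ (1 + (N : ℝ) / 2) * g x) (N + 1)

/-- Fourier transform with the convention `ĥ(ξ) = (2π)^{-1/2} ∫ e^{-ixξ} h(x) dx`. -/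
noncomputable def FT (h : ℝ → ℂ) (ξ : ℝ) : ℂ :=
  (Real.sqrt (2 * Real.pi) : ℂ)⁻¹ * ∫ x : ℝ, Complex.exp (-(Complex.I * x * ξ)) * h x

/-- Inverse Fourier transform `(2π)^{-1/2} ∫ e^{+ixξ} h(ξ) dξ`. -/
noncomputable def IFT (h : ℝ → ℂ) (x : ℝ) : ℂ :=
  (Real.sqrt (2 * Real.pi) : ℂ)⁻¹ * ∫ ξ : ℝ, Complex.exp (Complex.I * x * ξ) * h ξ

/-- The Klein–Gordon half-wave `⟨∇⟩^{-1} sin(τ⟨∇⟩) h`, realized as the Fourier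
multiplier with symbol `⟨ξ⟩^{-1} sin(τ⟨ξ⟩)`. -/
noncomputable def KGprop (τ : ℝ) (h : ℝ → ℝ) (x : ℝ) : ℝ :=
  (IFT (fun ξ => ((Real.sin (τ * jap ξ) / jap ξ : ℝ) : ℂ) * FT (fun z => ((h z : ℝ) : ℂ)) ξ) x).re

/-- The Duhamel component `u₁(t) = ∫₁ᵗ ⟨∇⟩^{-1} sin((t−s)⟨∇⟩)[β(·) u(s,·)³] ds`. -/
noncomputable def u1 (β : ℝ → ℝ) (u : ℝ → ℝ → ℝ) (t x : ℝ) : ℝ :=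
  ∫ s in (1 : ℝ)..t, KGprop (t - s) (fun z => β z * (u s z) ^ 3) x

/-- The Lorentz boost `Zφ = t ∂_x φ + x ∂_t φ`. -/
noncomputable def Zb (φ : ℝ → ℝ → ℝ) (t x : ℝ) : ℝ := t * px φ t x + x * pt φ t x

/-- Weighted `L²` norm `‖⟨·⟩^{-2} χ_{S_t^R} h‖_{L²}`, where `S_t^R = {x : t² − x² ≤ R²}`. -/
noncomputable def wL2 (t R : ℝ) (h : ℝ → ℝ) : ℝ :=
  Real.sqrt (∫ x in {x : ℝ | t ^ 2 - x ^ 2 ≤ R ^ 2}, (jap x ^ (-(2 : ℝ)) * h x) ^ 2)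
open MeasureTheory

/-- Bessel-type entire functions. -/
noncomputable def bes (k : ℕ) (r : ℝ) : ℝ :=
  ∑' n : ℕ, (-1) ^ n * r ^ n / (4 ^ n * n.factorial * (n + k).factorial)

theorem bes_bound (k n : ℕ) (r M : ℝ) (h : |r| ≤ M) :
    ‖(-1) ^ n * r ^ n / (4 ^ n * n.factorial * (n + k).factorial)‖ ≤ M ^ n / n.factorial := by
  have h1 : (1:ℝ) ≤ 4 ^ n := one_le_pow₀ (by norm_num)
  have h2 : (1:ℝ) ≤ (n + k).factorial := by exact_mod_cast Nat.factorial_pos _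
  have h3 : (1:ℝ) ≤ n.factorial := by exact_mod_cast Nat.factorial_pos _
  rw [norm_div, norm_mul, norm_pow, norm_pow]
  simp only [norm_neg, norm_one, one_pow, one_mul, Real.norm_eq_abs]
  have h4 : |(4:ℝ) ^ n * n.factorial * (n + k).factorial| = 4 ^ n * n.factorial * (n + k).factorial :=
    abs_of_pos (by positivity)
  rw [h4]
  apply div_le_div₀ (pow_nonneg ((abs_nonneg r).trans h) n) (pow_le_pow_left₀ (abs_nonneg _) h _) (by positivity)
  have : (n.factorial : ℝ) ≤ 4 ^ n * n.factorial := by nlinarith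
  nlinarith [mul_nonneg (by positivity : (0:ℝ) ≤ 4 ^ n * n.factorial) (sub_nonneg.2 h2)]

theorem bes_summable (k : ℕ) (r : ℝ) :
    Summable fun n : ℕ => (-1) ^ n * r ^ n / (4 ^ n * n.factorial * (n + k).factorial) :=
  Summable.of_norm_bounded (Real.summable_pow_div_factorial |r|)
    (fun n => bes_bound k n r |r| le_rfl)

theorem bes_hasDerivAt (k : ℕ) (r : ℝ) : HasDerivAt (bes k) (-(1 / 4) * bes (k + 1) r) r := by
  set M := |r| + 1 with hM
  have hM0 : 0 < M := by positivity
  have key := hasDerivAt_tsum_of_isPreconnected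
    (g := fun (n : ℕ) (r : ℝ) => (-1) ^ n * r ^ n / (4 ^ n * n.factorial * (n + k).factorial))
    (g' := fun (n : ℕ) (r : ℝ) => (-1) ^ n * (n * r ^ (n - 1)) / (4 ^ n * n.factorial * (n + k).factorial))
    (u := fun n : ℕ => n * M ^ (n - 1) / n.factorial)
    (t := Metric.ball 0 M) (y₀ := r) (y := r) ?_ Metric.isOpen_ball (convex_ball 0 M).isPreconnected
    ?_ ?_ (by simp [M]) (bes_summable k r) (by simp [M])
  · suffices hh : -(1 / 4) * bes (k + 1) r = ∑' (n : ℕ), (-1) ^ n * (↑n * r ^ (n - 1)) / (4 ^ n * ↑n.factorial * ↑(n + k).factorial) by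
      rw [hh]; exact key
    rw [Summable.tsum_eq_zero_add]
    · simp only [bes, ← tsum_mul_left]
      simp only [Nat.cast_zero, zero_mul, mul_zero, zero_div, zero_add]
      apply tsum_congr
      intro n
      have e : n + 1 + k = n + (k + 1) := by ring
      rw [e, Nat.factorial_succ n]
      push_cast
      try simp only [Nat.add_sub_cancel]
      have : ((n:ℝ) + 1) ≠ 0 := by positivity
      have h2 : ((n + (k+1)).factorial : ℝ) ≠ 0 := by positivity
      have h3 : ((n).factorial : ℝ) ≠ 0 := by positivity
      field_simp
      ring
    · rw [← summable_nat_add_iff 1]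
      refine Summable.of_norm_bounded (Real.summable_pow_div_factorial |r|) (fun n => ?_)
      have := bes_bound (k+1) n r |r| le_rfl
      refine le_trans ?_ this
      have e : n + 1 + k = n + (k + 1) := by ring
      rw [e, Nat.factorial_succ n]
      have h5 : ((n:ℝ) + 1) ≠ 0 := by positivity
      have h2 : ((n + (k+1)).factorial : ℝ) ≠ 0 := by positivity
      have h3 : ((n).factorial : ℝ) ≠ 0 := by positivity
      have : (-1 : ℝ) ^ (n + 1) * (((n + 1 : ℕ):ℝ) * r ^ (n + 1 - 1)) / (4 ^ (n + 1) * (((n + 1) * n.factorial : ℕ):ℝ) * (n + (k + 1)).factorial) = -(1/4) * ((-1) ^ n * r ^ n / (4 ^ n * n.factorial * (n + (k+1)).factorial)) := by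
        push_cast
        try simp only [Nat.add_sub_cancel]
        field_simp
        ring
      rw [this, norm_mul]
      have h0 := norm_nonneg ((-1 : ℝ) ^ n * r ^ n / (4 ^ n * n.factorial * (n + (k+1)).factorial))
      have : ‖(-(1/4) : ℝ)‖ ≤ 1 := by norm_num
      nlinarith
  · rw [← summable_nat_add_iff 1]
    refine (Real.summable_pow_div_factorial M).congr (fun n => ?_)
    rw [Nat.factorial_succ n]
    push_cast
    try simp only [Nat.add_sub_cancel]
    field_simp
  · intro n y hy
    exact (((hasDerivAt_pow n y).const_mul _).div_const _)
  · intro n y hy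
    have hy' : |y| ≤ M := by simpa using (Metric.mem_ball.1 hy).le
    rcases n with _ | n
    · simp
    have := bes_bound (k+1) n y M hy'
    have e : n + 1 + k = n + (k + 1) := by ring
    simp only [e, Nat.factorial_succ n]
    have h5 : ((n:ℝ) + 1) ≠ 0 := by positivity
    have h2 : ((n + (k+1)).factorial : ℝ) ≠ 0 := by positivity
    have h3 : ((n).factorial : ℝ) ≠ 0 := by positivity
    have e2 : (-1 : ℝ) ^ (n + 1) * (((n + 1 : ℕ):ℝ) * y ^ (n + 1 - 1)) / (4 ^ (n + 1) * (((n + 1) * n.factorial : ℕ):ℝ) * (n + (k + 1)).factorial) = -(1/4) * ((-1) ^ n * y ^ n / (4 ^ n * n.factorial * (n + (k+1)).factorial)) := by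
      push_cast
      try simp only [Nat.add_sub_cancel]
      field_simp
      ring
    have e3 : ((n + 1 : ℕ):ℝ) * M ^ (n + 1 - 1) / (((n + 1) * n.factorial : ℕ):ℝ) = M ^ n / n.factorial := by
      push_cast
      try simp only [Nat.add_sub_cancel]
      field_simp
    rw [e2, e3, norm_mul]
    have h0 := norm_nonneg ((-1 : ℝ) ^ n * y ^ n / (4 ^ n * n.factorial * (n + (k+1)).factorial))
    have : ‖(-(1/4) : ℝ)‖ ≤ 1 := by norm_num
    nlinarith

theorem bes_rec (k : ℕ) (r : ℝ) :
    bes k r = (k + 1) * bes (k + 1) r - r / 4 * bes (k + 2) r := by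
  have h : ∀ n : ℕ, (-1:ℝ) ^ (n+1) * r ^ (n+1) / (4 ^ (n+1) * (n+1).factorial * (n + 1 + k).factorial)
      = (k + 1) * ((-1) ^ (n+1) * r ^ (n+1) / (4 ^ (n+1) * (n+1).factorial * (n + 1 + (k+1)).factorial))
        - r / 4 * ((-1) ^ n * r ^ n / (4 ^ n * n.factorial * (n + (k+2)).factorial)) := by
    intro n
    have e1 : n + 1 + (k + 1) = (n + 1 + k) + 1 := by ring
    have e2 : n + (k + 2) = (n + 1 + k) + 1 := by ring
    rw [e1, e2, Nat.factorial_succ (n+1+k), Nat.factorial_succ n]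
    push_cast
    have h5 : ((n:ℝ) + 1) ≠ 0 := by positivity
    have h6 : ((n:ℝ) + 1 + k + 1) ≠ 0 := by positivity
    have h2 : ((n + 1 + k).factorial : ℝ) ≠ 0 := by positivity
    have h3 : ((n).factorial : ℝ) ≠ 0 := by positivity
    field_simp
    ring
  have s0 := bes_summable k r
  have s1 := bes_summable (k+1) r
  have s2 := bes_summable (k+2) r
  have s1' := (summable_nat_add_iff 1).2 s1
  unfold bes
  rw [s0.tsum_eq_zero_add, s1.tsum_eq_zero_add]
  simp_rw [h]
  rw [Summable.tsum_sub (s1'.mul_left _) (s2.mul_left _), tsum_mul_left, tsum_mul_left]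
  have h2 : ((k).factorial : ℝ) ≠ 0 := by positivity
  have h6 : ((k:ℝ) + 1) ≠ 0 := by positivity
  simp only [zero_add, Nat.factorial_succ k, pow_zero, Nat.factorial_zero]
  push_cast
  field_simp
  ring

theorem bes_zero_zero : bes 0 0 = 1 := by
  unfold bes
  rw [tsum_eq_single 0]
  · simp
  · intro n hn; simp [hn]

theorem bes_continuous (k : ℕ) : Continuous (bes k) :=
  continuous_iff_continuousAt.2 fun r => (bes_hasDerivAt k r).continuousAt

/-- decay of Bessel functions -/
theorem bes_decay_aux (ρ : ℝ) (hρ : 1 ≤ ρ) :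
    ρ * (4 * ρ ^ 2 * (-(1/4) * bes 1 (ρ^2)) ^ 2 + bes 0 (ρ^2) ^ 2) + 2 * ρ * bes 0 (ρ^2) * (-(1/4) * bes 1 (ρ^2))
      + bes 0 (ρ^2) ^ 2 / (2 * ρ) ≤
    (4 * (-(1/4) * bes 1 1) ^ 2 + bes 0 1 ^ 2) + 2 * bes 0 1 * (-(1/4) * bes 1 1)
      + bes 0 1 ^ 2 / 2 := by
  set E : ℝ → ℝ := fun ρ => ρ * (4 * ρ ^ 2 * (-(1/4) * bes 1 (ρ^2)) ^ 2 + bes 0 (ρ^2) ^ 2) + 2 * ρ * bes 0 (ρ^2) * (-(1/4) * bes 1 (ρ^2))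
      + bes 0 (ρ^2) ^ 2 / (2 * ρ) with hE
  have hd : ∀ x : ℝ, 0 < x → HasDerivAt E (-(bes 0 (x^2))^2 / (2 * x^2)) x := by
    intro x hx
    have hsq : HasDerivAt (fun y : ℝ => y ^ 2) (2 * x) x := by simpa using hasDerivAt_pow 2 x
    have h0 : HasDerivAt (fun y : ℝ => bes 0 (y ^ 2)) (-(1/4) * bes 1 (x^2) * (2 * x)) x :=
      HasDerivAt.comp (h₂ := bes 0) x (bes_hasDerivAt 0 (x^2)) hsq
    have h1 : HasDerivAt (fun y : ℝ => bes 1 (y ^ 2)) (-(1/4) * bes 2 (x^2) * (2 * x)) x :=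
      HasDerivAt.comp (h₂ := bes 1) x (bes_hasDerivAt 1 (x^2)) hsq
    have h1' := h1.const_mul (-(1/4):ℝ)
    have A := (hasDerivAt_id' x).mul (((hsq.const_mul 4).mul (h1'.pow 2)).add (h0.pow 2))
    have B := (((hasDerivAt_id' x).const_mul 2).mul h0).mul h1'
    have D := (h0.pow 2).div ((hasDerivAt_id' x).const_mul 2) (by positivity)
    have T := (A.add B).add D
    refine HasDerivAt.congr_deriv (f := E) T ?_
    have hr := bes_rec 0 (x^2)
    simp only [Nat.cast_zero, zero_add, one_mul] at hr
    have hr2 : bes 2 (x^2) = (bes 1 (x^2) - bes 0 (x^2)) * 4 / x^2 := by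
      field_simp; linarith
    try simp only [Pi.pow_apply, Pi.mul_apply, Pi.add_apply]
    rw [hr2]
    field_simp
    ring
  have hanti : AntitoneOn E (Set.Ici 1) := by
    apply antitoneOn_of_deriv_nonpos (convex_Ici 1)
    · intro x hx
      exact (hd x (lt_of_lt_of_le one_pos hx)).continuousAt.continuousWithinAt
    · intro x hx
      rw [interior_Ici] at hx
      exact (hd x (lt_trans one_pos hx)).differentiableAt.differentiableWithinAt
    · intro x hx
      rw [interior_Ici] at hx
      rw [(hd x (lt_trans one_pos hx)).deriv]
      have : 0 ≤ (bes 0 (x^2))^2 / (2 * x^2) := by positivity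
      rw [neg_div]; linarith
  have := hanti (Set.self_mem_Ici) (show ρ ∈ Set.Ici (1:ℝ) from hρ) hρ
  simpa [hE] using this

theorem bes_decay : ∃ C > 0, ∀ r : ℝ, 0 ≤ r →
    |bes 0 r| ≤ C * (1 + r) ^ (-(1/4) : ℝ) ∧ |bes 1 r| ≤ C * (1 + r) ^ (-(3/4) : ℝ) := by
  set E1 := (4 * (-(1/4) * bes 1 1) ^ 2 + bes 0 1 ^ 2) + 2 * bes 0 1 * (-(1/4) * bes 1 1)
      + bes 0 1 ^ 2 / 2 with hE1
  have hlarge : ∀ ρ : ℝ, 1 ≤ ρ → bes 0 (ρ^2) ^ 2 * ρ ≤ E1 ∧ bes 1 (ρ^2)^2 * ρ^3 ≤ 8 * E1 := by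
    intro ρ hρ
    have h := bes_decay_aux ρ hρ
    rw [← hE1] at h
    set P := bes 0 (ρ^2)
    set Q := bes 1 (ρ^2)
    have hρ0 : 0 < ρ := by linarith
    have hd : P^2 / (2*ρ) = (P^2/ρ)/2 := by field_simp
    constructor
    · have : 0 ≤ ρ * (ρ * (1/2) * Q - P / ρ / 2)^2 + P^2/ρ/4 := by positivity
      have e : ρ * (ρ * (1/2) * Q - P / ρ / 2)^2 + P^2/ρ/4 = ρ^3 * Q^2/4 - ρ * P * Q / 2 + P^2/ρ/2 := by
        field_simp; ring
      nlinarith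
    · have : 0 ≤ ρ * (ρ * (1/2) * Q - P / ρ)^2 / 2 + ρ * P^2:= by positivity
      have e : ρ * (ρ * (1/2) * Q - P / ρ)^2 / 2 = ρ^3 * Q^2/8 - ρ * P * Q / 2 + P^2/ρ/2 := by
        field_simp; ring
      nlinarith
  have hE1n : 0 ≤ E1 := by
    have := (hlarge 1 le_rfl).1
    simp only [one_pow, mul_one] at this
    nlinarith [sq_nonneg (bes 0 1)]
  obtain ⟨B0, hB0⟩ := isCompact_Icc.exists_bound_of_continuousOn (s := Set.Icc (0:ℝ) 1) (bes_continuous 0).continuousOn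
  obtain ⟨B1, hB1⟩ := isCompact_Icc.exists_bound_of_continuousOn (s := Set.Icc (0:ℝ) 1) (bes_continuous 1).continuousOn
  have hB0n : 0 ≤ B0 := (norm_nonneg _).trans (hB0 0 (by simp))
  have hB1n : 0 ≤ B1 := (norm_nonneg _).trans (hB1 0 (by simp))
  refine ⟨2 * (B0 + B1 + Real.sqrt (8 * E1) + 1), by positivity, fun r hr => ?_⟩
  have h2a : (1/2:ℝ) ≤ 2 ^ (-(3/4):ℝ) := by
    have := Real.rpow_le_rpow_of_exponent_le (x := 2) (by norm_num) (show (-1:ℝ) ≤ -(3/4) by norm_num)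
    rw [Real.rpow_neg_one] at this; linarith
  have h2b : (1/2:ℝ) ≤ 2 ^ (-(1/4):ℝ) := by
    have := Real.rpow_le_rpow_of_exponent_le (x := 2) (by norm_num) (show (-1:ℝ) ≤ -(1/4) by norm_num)
    rw [Real.rpow_neg_one] at this; linarith
  have hs := Real.sqrt_nonneg (8 * E1)
  by_cases h1 : r ≤ 1
  · have ha : (1/2:ℝ) ≤ (1 + r) ^ (-(3/4):ℝ) := h2a.trans
      (Real.rpow_le_rpow_of_nonpos (by positivity) (by linarith) (by norm_num))
    have hb : (1/2:ℝ) ≤ (1 + r) ^ (-(1/4):ℝ) := h2b.trans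
      (Real.rpow_le_rpow_of_nonpos (by positivity) (by linarith) (by norm_num))
    have := hB0 r ⟨hr, h1⟩
    have := hB1 r ⟨hr, h1⟩
    simp only [Real.norm_eq_abs] at *
    constructor <;> nlinarith
  · push Not at h1
    have hsr : 1 ≤ Real.sqrt r := by rw [Real.one_le_sqrt]; exact h1.le
    obtain ⟨k0, k1⟩ := hlarge (Real.sqrt r) hsr
    rw [Real.sq_sqrt hr] at k0 k1
    have hrp : 0 < r := by linarith
    have e1 : Real.sqrt r = (r ^ (1/4:ℝ))^2 := by
      rw [← Real.rpow_natCast, ← Real.rpow_mul hr, Real.sqrt_eq_rpow]; norm_num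
    have e3 : Real.sqrt r ^ 3= (r ^ (3/4:ℝ))^2 := by
      rw [← Real.rpow_natCast (r ^ (3/4:ℝ)), ← Real.rpow_mul hr, Real.sqrt_eq_rpow, ← Real.rpow_natCast, ← Real.rpow_mul hr]; norm_num
    have g0 : |bes 0 r| * r ^ (1/4:ℝ) ≤ Real.sqrt (8 * E1) := by
      apply Real.le_sqrt_of_sq_le
      rw [mul_pow, sq_abs, ← e1]; linarith
    have g1 : |bes 1 r| * r ^ (3/4:ℝ) ≤ Real.sqrt (8 * E1) := by
      apply Real.le_sqrt_of_sq_le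
      rw [mul_pow, sq_abs, ← e3]; linarith
    have ha : (1/2) * r ^ (-(3/4):ℝ) ≤ (1 + r) ^ (-(3/4):ℝ) := by
      calc (1/2) * r ^ (-(3/4):ℝ) ≤ 2 ^ (-(3/4):ℝ) * r ^ (-(3/4):ℝ) := by gcongr
        _ = (2 * r) ^ (-(3/4):ℝ) := by rw [Real.mul_rpow (by norm_num) hr]
        _ ≤ _ := (Real.rpow_le_rpow_of_nonpos (by positivity) (by linarith) (by norm_num))
    have hb : (1/2) * r ^ (-(1/4):ℝ) ≤ (1 + r) ^ (-(1/4):ℝ) := by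
      calc (1/2) * r ^ (-(1/4):ℝ) ≤ 2 ^ (-(1/4):ℝ) * r ^ (-(1/4):ℝ) := by gcongr
        _ = (2 * r) ^ (-(1/4):ℝ) := by rw [Real.mul_rpow (by norm_num) hr]
        _ ≤ _ := (Real.rpow_le_rpow_of_nonpos (by positivity) (by linarith) (by norm_num))
    rw [Real.rpow_neg hr, ← div_eq_mul_inv] at ha hb
    have p0 : 0 < r ^ (1/4:ℝ) := by positivity
    have p1 : 0 < r ^ (3/4:ℝ) := by positivity
    constructor
    · calc |bes 0 r| ≤ Real.sqrt (8 * E1) / r ^ (1/4:ℝ) := by rw [le_div_iff₀ p0]; exact g0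
        _ = (2 * Real.sqrt (8*E1)) * (1/2/r ^ (1/4:ℝ)) := by ring
        _ ≤ _ := by gcongr; linarith
    · calc |bes 1 r| ≤ Real.sqrt (8 * E1) / r ^ (3/4:ℝ) := by rw [le_div_iff₀ p1]; exact g1
        _ = (2 * Real.sqrt (8*E1)) * (1/2/r ^ (3/4:ℝ)) := by ring
        _ ≤ _ := by gcongr; linarith
open MeasureTheory

theorem param_deriv (F F' : ℝ → ℝ → ℝ) (hF : Continuous (Function.uncurry F))
    (hF' : Continuous (Function.uncurry F'))
    (h : ∀ x s, HasDerivAt (fun x => F x s) (F' x s) x) (a b x : ℝ) :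
    HasDerivAt (fun x => ∫ s in a..b, F x s) (∫ s in a..b, F' x s) x := by
  obtain ⟨M, hM⟩ := (((isCompact_Icc (a := x - 1) (b := x + 1)).prod
    (isCompact_uIcc (a := a) (b := b)))).exists_bound_of_continuousOn hF'.continuousOn
  refine (intervalIntegral.hasDerivAt_integral_of_dominated_loc_of_deriv_le
    (s := Set.Icc (x - 1) (x + 1)) (bound := fun _ => M) (Icc_mem_nhds (by linarith) (by linarith))
    ?_ ?_ ?_ ?_ ?_ ?_).2
  · exact Filter.Eventually.of_forall fun y =>
      (hF.comp (Continuous.prodMk_right y)).aestronglyMeasurable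
  · exact (hF.comp (Continuous.prodMk_right x)).intervalIntegrable _ _
  · exact (hF'.comp (Continuous.prodMk_right x)).aestronglyMeasurable
  · exact Filter.Eventually.of_forall fun s hs y hy =>
      hM (y, s) ⟨hy, Set.uIoc_subset_uIcc hs⟩
  · exact intervalIntegrable_const
  · exact Filter.Eventually.of_forall fun s hs y hy => h y s

theorem leibniz (F F' : ℝ → ℝ → ℝ) (hF : Continuous (Function.uncurry F))
    (hF' : Continuous (Function.uncurry F'))
    (h : ∀ x s, HasDerivAt (fun x => F x s) (F' x s) x) (t : ℝ) :
    HasDerivAt (fun t => ∫ z in (0:ℝ)..t, F t z) (F t t + ∫ z in (0:ℝ)..t, F' t z) t := by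
  have cF : ∀ a, Continuous (F a) := fun a => hF.comp (Continuous.prodMk_right a)
  have key := hasStrictFDerivAt_uncurry_coprod (𝕜 := ℝ) (u := ((t, t) : ℝ × ℝ))
    (f := fun a b => ∫ z in (0:ℝ)..b, F a z)
    (f₁ := fun a b => ContinuousLinearMap.toSpanSingleton ℝ (∫ z in (0:ℝ)..b, F' a z))
    (f₂ := fun a b => ContinuousLinearMap.toSpanSingleton ℝ (F a b)) ?_ ?_ ?_ ?_
  · have hc : HasDerivAt (fun t : ℝ => (t, t)) ((1:ℝ), (1:ℝ)) t :=
      (hasDerivAt_id' t).prodMk (hasDerivAt_id' t)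
    have := HasFDerivAt.comp_hasDerivAt (f := fun t : ℝ => (t, t)) t key.hasFDerivAt hc
    refine HasDerivAt.congr_deriv (f := fun t => ∫ z in (0:ℝ)..t, F t z) this ?_
    simp [Function.HasUncurry.uncurry, add_comm]
  · refine Filter.Eventually.of_forall fun v => ?_
    have := param_deriv F F' hF hF' h 0 v.2 v.1
    exact this.hasFDerivAt
  · refine Filter.Eventually.of_forall fun v => ?_
    have : HasDerivAt (fun b => ∫ z in (0:ℝ)..b, F v.1 z) (F v.1 v.2) v.2 :=
      intervalIntegral.integral_hasDerivAt_right ((cF v.1).intervalIntegrable _ _)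
        ((cF v.1).stronglyMeasurableAtFilter _ _) (cF v.1).continuousAt
    exact this.hasFDerivAt
  · apply Continuous.continuousAt
    have : Continuous fun p : ℝ × ℝ => ∫ z in (0:ℝ)..p.2, F' p.1 z :=
      intervalIntegral.continuous_parametric_primitive_of_continuous (f := F') hF'
    have h2 : Continuous fun c : ℝ => ContinuousLinearMap.toSpanSingleton ℝ c :=
      (ContinuousLinearMap.toSpanSingletonCLE (𝕜 := ℝ) (E := ℝ)).continuous
    exact h2.comp this
  · apply Continuous.continuousAt
    have h2 : Continuous fun c : ℝ => ContinuousLinearMap.toSpanSingleton ℝ c :=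
      (ContinuousLinearMap.toSpanSingletonCLE (𝕜 := ℝ) (E := ℝ)).continuous
    exact h2.comp hF

theorem bes_comp (k : ℕ) (τ z : ℝ) :
    HasDerivAt (fun τ : ℝ => bes k (τ ^ 2 - z ^ 2)) (-(1/4) * bes (k+1) (τ^2 - z^2) * (2 * τ)) τ ∧
    HasDerivAt (fun z : ℝ => bes k (τ ^ 2 - z ^ 2)) (-(1/4) * bes (k+1) (τ^2 - z^2) * (-(2 * z))) z := by
  have hsq : ∀ x : ℝ, HasDerivAt (fun y : ℝ => y ^ 2) (2 * x) x := fun x => by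
    simpa using hasDerivAt_pow 2 x
  constructor
  · exact HasDerivAt.comp (h₂ := bes k) τ (bes_hasDerivAt k _) ((hsq τ).sub_const _)
  · exact HasDerivAt.comp (h₂ := bes k) z (bes_hasDerivAt k _) ((hsq z).const_sub _)

theorem kernel_fourier (ξ τ : ℝ) :
    ∫ z in (0:ℝ)..τ, bes 0 (τ ^ 2 - z ^ 2) * Real.cos (z * ξ) = Real.sin (τ * jap ξ) / jap ξ := by
  have hj : 0 < jap ξ := by unfold jap; positivity
  have hj2 : jap ξ ^ 2 = 1 + ξ ^ 2 := by unfold jap; rw [Real.sq_sqrt (by positivity)]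
  have cb : ∀ k, Continuous fun p : ℝ × ℝ => bes k (p.1 ^ 2 - p.2 ^ 2) := fun k =>
    (bes_continuous k).comp (by fun_prop)
  have cb1 : ∀ k, ∀ τ : ℝ, Continuous fun z : ℝ => bes k (τ ^ 2 - z ^ 2) := fun k τ =>
    (bes_continuous k).comp (by fun_prop)
  set y : ℝ → ℝ := fun τ => ∫ z in (0:ℝ)..τ, bes 0 (τ ^ 2 - z ^ 2) * Real.cos (z * ξ) with hy
  set y1 : ℝ → ℝ := fun τ => Real.cos (τ * ξ) +
    ∫ z in (0:ℝ)..τ, (-(1/4) * bes 1 (τ^2 - z^2) * (2 * τ)) * Real.cos (z * ξ) with hy1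
  have d0 : ∀ τ, HasDerivAt y (y1 τ) τ := by
    intro τ
    have := leibniz (fun τ z => bes 0 (τ ^ 2 - z ^ 2) * Real.cos (z * ξ))
      (fun τ z => (-(1/4) * bes 1 (τ^2 - z^2) * (2 * τ)) * Real.cos (z * ξ))
      (by have := cb 0; simp only [Function.uncurry_def]; fun_prop)
      (by have := cb 1; simp only [Function.uncurry_def]; fun_prop)
      (fun τ z => (bes_comp 0 τ z).1.mul_const _) τ
    refine HasDerivAt.congr_deriv (f := y) this ?_
    simp [hy1, bes_zero_zero]
  have d1 : ∀ τ, HasDerivAt y1 (-(jap ξ)^2 * y τ) τ := by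
    intro τ
    have hl := leibniz (fun τ z => (-(1/4) * bes 1 (τ^2 - z^2) * (2 * τ)) * Real.cos (z * ξ))
      (fun τ z => (-(1/4) * (-(1/4) * bes 2 (τ^2 - z^2) * (2 * τ)) * (2 * τ) + -(1/4) * bes 1 (τ^2 - z^2) * (2 * 1)) * Real.cos (z * ξ))
      (by have := cb 1; simp only [Function.uncurry_def]; fun_prop)
      (by have := cb 1; have := cb 2; simp only [Function.uncurry_def]; fun_prop)
      (fun τ z => (((bes_comp 1 τ z).1.const_mul (-(1/4))).mul ((hasDerivAt_id' τ).const_mul 2)).mul_const _) τ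
    have hcos : HasDerivAt (fun τ : ℝ => Real.cos (τ * ξ)) (-Real.sin (τ * ξ) * (1 * ξ)) τ :=
      ((hasDerivAt_id' τ).mul_const ξ).cos
    refine HasDerivAt.congr_deriv (f := y1) (hcos.add hl) ?_
    -- Q
    have hQ : ∀ z ∈ Set.uIcc 0 τ, HasDerivAt (fun z : ℝ => bes 0 (τ^2 - z^2) * (ξ * Real.sin (z * ξ))
        - (2 * z) * (-(1/4) * bes 1 (τ^2 - z^2)) * Real.cos (z * ξ))
        ((-(1/4) * bes 1 (τ^2 - z^2) * (-(2 * z))) * (ξ * Real.sin (z * ξ))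
          + bes 0 (τ^2 - z^2) * (ξ * (Real.cos (z * ξ) * (1 * ξ)))
          - (((2 * 1) * (-(1/4) * bes 1 (τ^2 - z^2)) + (2 * z) * (-(1/4) * (-(1/4) * bes 2 (τ^2 - z^2) * (-(2 * z))))) * Real.cos (z * ξ)
            + (2 * z) * (-(1/4) * bes 1 (τ^2 - z^2)) * (-Real.sin (z * ξ) * (1 * ξ)))) z := by
      intro z _
      have hc : HasDerivAt (fun τ : ℝ => Real.cos (τ * ξ)) (-Real.sin (z * ξ) * (1 * ξ)) z :=
        ((hasDerivAt_id' z).mul_const ξ).cos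
      have hs : HasDerivAt (fun τ : ℝ => Real.sin (τ * ξ)) (Real.cos (z * ξ) * (1 * ξ)) z :=
        ((hasDerivAt_id' z).mul_const ξ).sin
      exact ((bes_comp 0 τ z).2.mul (hs.const_mul ξ)).sub
        ((((hasDerivAt_id' z).const_mul 2).mul ((bes_comp 1 τ z).2.const_mul (-(1/4)))).mul hc)
    have c0 := cb1 0 τ
    have c1 := cb1 1 τ
    have c2 := cb1 2 τ
    have hFTC := intervalIntegral.integral_eq_sub_of_hasDerivAt hQ
      (Continuous.intervalIntegrable (by fun_prop) _ _)
    have e1 : -(jap ξ)^2 * y τ = ∫ z in (0:ℝ)..τ, -(1 + ξ^2) * (bes 0 (τ ^ 2 - z ^ 2) * Real.cos (z * ξ)) := by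
      rw [hj2, hy, intervalIntegral.integral_const_mul]
    rw [e1]
    have e2 : ∀ z : ℝ, -(1 + ξ^2) * (bes 0 (τ ^ 2 - z ^ 2) * Real.cos (z * ξ)) =
       (-(1/4) * (-(1/4) * bes 2 (τ^2 - z^2) * (2 * τ)) * (2 * τ) + -(1/4) * bes 1 (τ^2 - z^2) * (2 * 1)) * Real.cos (z * ξ) - ((-(1/4) * bes 1 (τ^2 - z^2) * (-(2 * z))) * (ξ * Real.sin (z * ξ))
          + bes 0 (τ^2 - z^2) * (ξ * (Real.cos (z * ξ) * (1 * ξ)))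
          - (((2 * 1) * (-(1/4) * bes 1 (τ^2 - z^2)) + (2 * z) * (-(1/4) * (-(1/4) * bes 2 (τ^2 - z^2) * (-(2 * z))))) * Real.cos (z * ξ)
            + (2 * z) * (-(1/4) * bes 1 (τ^2 - z^2)) * (-Real.sin (z * ξ) * (1 * ξ)))) := by
      intro z
      have hr := bes_rec 0 (τ^2 - z^2)
      simp only [Nat.cast_zero, zero_add, one_mul] at hr
      rw [hr]; ring
    simp_rw [e2]
    rw [intervalIntegral.integral_sub (Continuous.intervalIntegrable (by fun_prop) _ _)
      (Continuous.intervalIntegrable (by fun_prop) _ _), hFTC]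
    simp [bes_zero_zero]
    ring
  -- uniqueness
  set w : ℝ → ℝ := fun τ => (y1 τ - Real.cos (τ * jap ξ))^2 + (jap ξ * y τ - Real.sin (τ * jap ξ))^2 with hw
  have dw : ∀ τ, HasDerivAt w 0 τ := by
    intro τ
    have hc : HasDerivAt (fun τ : ℝ => Real.cos (τ * jap ξ)) (-Real.sin (τ * jap ξ) * (1 * jap ξ)) τ :=
      ((hasDerivAt_id' τ).mul_const _).cos
    have hs : HasDerivAt (fun τ : ℝ => Real.sin (τ * jap ξ)) (Real.cos (τ * jap ξ) * (1 * jap ξ)) τ :=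
      ((hasDerivAt_id' τ).mul_const _).sin
    refine HasDerivAt.congr_deriv (f := w) ((((d1 τ).sub hc).pow 2).add ((((d0 τ).const_mul (jap ξ)).sub hs).pow 2)) ?_
    simp
    ring
  have hconst : w τ = w 0 := is_const_of_deriv_eq_zero (fun x => (dw x).differentiableAt)
    (fun x => (dw x).deriv) τ 0
  have hw0 : w 0 = 0 := by simp [hw, hy, hy1]
  rw [hw0] at hconst
  have : jap ξ * y τ - Real.sin (τ * jap ξ) = 0 := by
    have h1 := sq_nonneg (y1 τ - Real.cos (τ * jap ξ))
    have h2 := sq_nonneg (jap ξ * y τ - Real.sin (τ * jap ξ))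
    have : (jap ξ * y τ - Real.sin (τ * jap ξ))^2 = 0 := by simp only [hw] at hconst; linarith
    exact pow_eq_zero_iff (two_ne_zero) |>.1 this
  show y τ = _
  field_simp
  linarith
open MeasureTheory

theorem fourier_memLp (h : ℝ → ℂ) (h1 : Integrable h) (h2 : MemLp h 2) :
    MemLp (FourierTransform.fourier h) 2 := by
  set H : Lp (α := ℝ) ℂ 2 := h2.toLp h with hH
  have hcont : Continuous (FourierTransform.fourier h) :=
    VectorFourier.fourierIntegral_continuous Real.continuous_fourierChar continuous_inner h1
  have key : (FourierTransform.fourier h) =ᵐ[volume] (FourierTransform.fourier H : Lp (α := ℝ) ℂ 2) := by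
    apply ae_eq_of_integral_contDiff_smul_eq
    · exact hcont.locallyIntegrable
    · exact (Lp.memLp _).locallyIntegrable (by norm_num)
    · intro g g_smooth g_cpt
      have hg₁ : HasCompactSupport (Complex.ofRealCLM ∘ g) := g_cpt.comp_left rfl
      have hg₂ : ContDiff ℝ (⊤ : ℕ∞) (Complex.ofRealCLM ∘ g) := by fun_prop
      set G := hg₁.toSchwartzMap hg₂ with hG
      have e1 : ∫ x, g x • ((FourierTransform.fourier H : Lp (α := ℝ) ℂ 2) x)
          = ((FourierTransform.fourier H : Lp (α := ℝ) ℂ 2) : TemperedDistribution ℝ ℂ) G := by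
        rw [Lp.toTemperedDistribution_apply]
        simp [G]
      rw [e1, ← Lp.fourier_toTemperedDistribution_eq, TemperedDistribution.fourier_apply,
        Lp.toTemperedDistribution_apply]
      have e2 : ∫ x, (FourierTransform.fourier G) x • H x = ∫ x, (FourierTransform.fourier G) x • h x := by
        apply integral_congr_ae
        filter_upwards [h2.coeFn_toLp] with x hx
        rw [hH, hx]
      rw [e2]
      have e3 := VectorFourier.integral_fourierIntegral_smul_eq_flip (L := innerₗ ℝ)
        Real.continuous_fourierChar continuous_inner (G.integrable (μ := volume)) h1
      have e4 : ∫ x, (FourierTransform.fourier G) x • h x = ∫ x, G x • (FourierTransform.fourier h) x := by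
        simpa using! e3
      rw [e4]
      simp [G]
  exact (memLp_congr_ae key).2 (Lp.memLp _)
open MeasureTheory

noncomputable def kker (τ : ℝ) (z : ℝ) : ℂ :=
  (Set.Ioc (-τ) τ).indicator (fun z => ((1 / 2 * bes 0 (τ ^ 2 - z ^ 2) : ℝ) : ℂ)) z

theorem kker_cont (τ : ℝ) : Continuous (fun z : ℝ => ((1 / 2 * bes 0 (τ ^ 2 - z ^ 2) : ℝ) : ℂ)) := by
  have := bes_continuous 0
  fun_prop

theorem kker_memLp (τ : ℝ) (p : ENNReal) : MemLp (kker τ) p := by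
  have hc := kker_cont τ
  obtain ⟨M, hM⟩ := (isCompact_Icc (a := -τ) (b := τ)).exists_bound_of_continuousOn hc.continuousOn
  unfold kker
  rw [memLp_indicator_iff_restrict measurableSet_Ioc]
  refine MemLp.of_bound hc.aestronglyMeasurable M ?_
  filter_upwards [ae_restrict_mem measurableSet_Ioc] with x hx
  exact hM x ⟨hx.1.le, hx.2⟩

theorem kker_fourier (τ : ℝ) (hτ : 0 ≤ τ) (w : ℝ) :
    FourierTransform.fourier (kker τ) w
      = ((Real.sin (τ * jap (2 * Real.pi * w)) / jap (2 * Real.pi * w) : ℝ) : ℂ) := by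
  rw [Real.fourier_real_eq_integral_exp_smul, ← kernel_fourier]
  have e1 : (∫ v : ℝ, Complex.exp (↑(-2 * Real.pi * v * w) * Complex.I) • kker τ v)
      = ∫ v in (-τ)..τ, Complex.exp (↑(-2 * Real.pi * v * w) * Complex.I)
          * ((1 / 2 * bes 0 (τ ^ 2 - v ^ 2) : ℝ) : ℂ) := by
    rw [intervalIntegral.integral_of_le (by linarith), ← integral_indicator measurableSet_Ioc]
    congr 1
    ext v
    unfold kker
    by_cases hv : v ∈ Set.Ioc (-τ) τ <;> simp [hv, Set.indicator]
  set F : ℝ → ℂ := fun v => Complex.exp (↑(-2 * Real.pi * v * w) * Complex.I)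
          * ((1 / 2 * bes 0 (τ ^ 2 - v ^ 2) : ℝ) : ℂ) with hF
  have hFc : Continuous F := by
    have := kker_cont τ
    fun_prop
  have hFn : Continuous (fun v => F (-v)) := hFc.comp continuous_neg
  have e2 : ∫ v in (-τ)..0, F v = ∫ v in (0:ℝ)..τ, F (-v) := by
    rw [intervalIntegral.integral_comp_neg]; simp
  rw [e1, ← intervalIntegral.integral_add_adjacent_intervals (b := 0)
    (hFc.intervalIntegrable _ _) (hFc.intervalIntegrable _ _), e2,
    ← intervalIntegral.integral_add (hFn.intervalIntegrable _ _)
      (hFc.intervalIntegrable _ _), ← intervalIntegral.integral_ofReal]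
  apply intervalIntegral.integral_congr
  intro v _
  simp only [hF]
  have e3 : (-v) ^ 2 = v ^ 2 := by ring
  rw [e3, ← add_mul]
  have e4 : Complex.exp (↑(-2 * Real.pi * -v * w) * Complex.I)
      + Complex.exp (↑(-2 * Real.pi * v * w) * Complex.I)
      = 2 * ((Real.cos (v * (2 * Real.pi * w)) : ℝ) : ℂ) := by
    rw [Complex.ofReal_cos, Complex.two_cos]
    congr 2 <;> (push_cast; ring)
  rw [e4]
  push_cast
  ring

theorem KGprop_eq (τ : ℝ) (hτ : 0 ≤ τ) (h : ℝ → ℝ) (hc : Continuous h) (hi : Integrable h)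
    (M : ℝ) (hM : ∀ x, |h x| ≤ M) (x : ℝ) :
    KGprop τ h x = 1 / 2 * ∫ z in (-τ)..τ, bes 0 (τ ^ 2 - z ^ 2) * h (x - z) := by
  set hC : ℝ → ℂ := fun z => ((h z : ℝ) : ℂ) with hhC
  have hCc : Continuous hC := by fun_prop
  have hCi : Integrable hC := hi.ofReal
  have hC2 : MemLp hC 2 := by
    rw [memLp_two_iff_integrable_sq_norm hCc.aestronglyMeasurable]
    refine Integrable.mono' (g := fun x => M * |h x|) (hi.abs.const_mul M) (by fun_prop) ?_
    refine Filter.Eventually.of_forall fun x => ?_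
    simp only [hhC, Complex.norm_real, Real.norm_eq_abs, abs_pow, abs_abs]
    have := hM x
    nlinarith [abs_nonneg (h x)]
  have hk1 : Integrable (kker τ) := memLp_one_iff_integrable.1 (kker_memLp τ 1)
  set A := convolution (kker τ) hC (ContinuousLinearMap.mul ℂ ℂ) volume with hA
  have hAc : Continuous A := BddAbove.continuous_convolution_right_of_integrable _
    ⟨M, by rintro _ ⟨y, rfl⟩; simpa [hhC] using hM y⟩ hk1 hCc
  have hAi : Integrable A := hk1.integrable_convolution _ hCi
  have hAF : FourierTransform.fourier A
      = FourierTransform.fourier (kker τ) * FourierTransform.fourier hC := by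
    ext ξ
    exact Real.fourier_mul_convolution_eq hk1 hCi ξ
  have hAFi : Integrable (FourierTransform.fourier A) := by
    rw [hAF]
    exact MemLp.integrable_mul (fourier_memLp _ hk1 (kker_memLp τ 2)) (fourier_memLp _ hCi hC2)
  have inv := congrFun (hAc.fourierInv_fourier_eq hAi hAFi) x
  have hAx : A x = ((1 / 2 * ∫ z in (-τ)..τ, bes 0 (τ ^ 2 - z ^ 2) * h (x - z) : ℝ) : ℂ) := by
    rw [hA, convolution_def, ← intervalIntegral.integral_const_mul,
      ← intervalIntegral.integral_ofReal, intervalIntegral.integral_of_le (by linarith),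
      ← integral_indicator measurableSet_Ioc]
    congr 1
    ext v
    unfold kker
    by_cases hv : v ∈ Set.Ioc (-τ) τ
    · simp [hv, Set.indicator, hhC]
      ring
    · simp [hv, Set.indicator]
  have main : IFT (fun ξ => ((Real.sin (τ * jap ξ) / jap ξ : ℝ) : ℂ) * FT hC ξ) x = A x := by
    rw [← inv, Real.fourierInv_eq']
    set Φ : ℝ → ℂ := fun ξ => Complex.exp (Complex.I * x * ξ) *
      (((Real.sin (τ * jap ξ) / jap ξ : ℝ) : ℂ) *
        ∫ x : ℝ, Complex.exp (-(Complex.I * x * ξ)) * hC x) with hΦ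
    have c1 : ∀ v : ℝ, Complex.exp (↑(2 * Real.pi * inner ℝ v x) * Complex.I) •
        FourierTransform.fourier A v = Φ (2 * Real.pi * v) := by
      intro v
      rw [hAF, Pi.mul_apply, kker_fourier τ hτ, Real.fourier_real_eq_integral_exp_smul, hΦ]
      simp only [smul_eq_mul]
      congr 1
      · congr 1
        simp
        ring
      · congr 2
        ext y
        congr 2
        push_cast
        ring
    rw [integral_congr_ae (Filter.Eventually.of_forall c1),
      Measure.integral_comp_mul_left Φ (2 * Real.pi)]
    unfold IFT FT
    have c2 : ∀ ξ : ℝ, Complex.exp (Complex.I * x * ξ) *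
        (((Real.sin (τ * jap ξ) / jap ξ : ℝ) : ℂ) * ((Real.sqrt (2 * Real.pi) : ℂ)⁻¹ *
        ∫ x : ℝ, Complex.exp (-(Complex.I * x * ξ)) * hC x))
        = (Real.sqrt (2 * Real.pi) : ℂ)⁻¹ * Φ ξ := by
      intro ξ
      rw [hΦ]; ring
    rw [integral_congr_ae (Filter.Eventually.of_forall c2), integral_const_mul, ← mul_assoc,
      Complex.real_smul]
    congr 1
    rw [abs_of_pos (by positivity), ← mul_inv, ← Complex.ofReal_mul,
      Real.mul_self_sqrt (by positivity), Complex.ofReal_inv]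
  unfold KGprop
  rw [main, hAx, Complex.ofReal_re]
open MeasureTheory

theorem cont_sym (F : (ℝ × ℝ) → ℝ → ℝ) (hF : Continuous (Function.uncurry F)) (τ : ℝ × ℝ → ℝ)
    (hτ : Continuous τ) : Continuous (fun p : ℝ × ℝ => ∫ z in (-(τ p))..(τ p), F p z) := by
  have e : (fun p : ℝ × ℝ => ∫ z in (-(τ p))..(τ p), F p z)
      = fun p => (∫ z in (0:ℝ)..(τ p), F p z) - ∫ z in (0:ℝ)..(-(τ p)), F p z := by
    ext p
    have hc : Continuous (F p) := by
      have := hF.comp (Continuous.prodMk_right p)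
      exact this
    rw [intervalIntegral.integral_interval_sub_left (hc.intervalIntegrable _ _)
      (hc.intervalIntegrable _ _)]
  rw [e]
  exact (intervalIntegral.continuous_parametric_intervalIntegral_of_continuous hF hτ).sub
    (intervalIntegral.continuous_parametric_intervalIntegral_of_continuous hF hτ.neg)

noncomputable def UU (h : ℝ → ℝ → ℝ) (t x : ℝ) : ℝ :=
  ∫ s in (1:ℝ)..t, 1 / 2 * ∫ z in (-(t - s))..(t - s), bes 0 ((t - s) ^ 2 - z ^ 2) * h s (x - z)

noncomputable def DU (h : ℝ → ℝ → ℝ) (t x : ℝ) : ℝ :=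
  ∫ s in (1:ℝ)..t, 1 / 2 * (h s (x + (t - s)) - h s (x - (t - s))
    + ∫ z in (-(t - s))..(t - s), z / 2 * bes 1 ((t - s) ^ 2 - z ^ 2) * h s (x - z))

theorem UU_deriv (h h' : ℝ → ℝ → ℝ) (hc : Continuous (Function.uncurry h))
    (hc' : Continuous (Function.uncurry h')) (hd : ∀ s y, HasDerivAt (h s) (h' s y) y)
    (t x : ℝ) : HasDerivAt (UU h t) (DU h t x) x := by
  have b0 := bes_continuous 0
  have b1 := bes_continuous 1
  have hh : ∀ s, Continuous (h s) := fun s => hc.comp (Continuous.prodMk_right s)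
  have hh' : ∀ s, Continuous (h' s) := fun s => hc'.comp (Continuous.prodMk_right s)
  have key := param_deriv
    (fun x s => 1 / 2 * ∫ z in (-(t - s))..(t - s), bes 0 ((t - s) ^ 2 - z ^ 2) * h s (x - z))
    (fun x s => 1 / 2 * ∫ z in (-(t - s))..(t - s), bes 0 ((t - s) ^ 2 - z ^ 2) * h' s (x - z))
    (by
      refine continuous_const.mul (cont_sym (fun p z => bes 0 ((t - p.2) ^ 2 - z ^ 2) * h p.2 (p.1 - z))
        ?_ (fun p => t - p.2) (by fun_prop))
      have : Continuous fun q : (ℝ × ℝ) × ℝ => Function.uncurry h (q.1.2, q.1.1 - q.2) :=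
        hc.comp (by fun_prop)
      refine Continuous.mul ?_ this
      fun_prop)
    (by
      refine continuous_const.mul (cont_sym (fun p z => bes 0 ((t - p.2) ^ 2 - z ^ 2) * h' p.2 (p.1 - z))
        ?_ (fun p => t - p.2) (by fun_prop))
      have : Continuous fun q : (ℝ × ℝ) × ℝ => Function.uncurry h' (q.1.2, q.1.1 - q.2) :=
        hc'.comp (by fun_prop)
      refine Continuous.mul ?_ this
      fun_prop)
    (by
      intro x s
      refine HasDerivAt.const_mul _ ?_
      refine param_deriv (fun x z => bes 0 ((t - s) ^ 2 - z ^ 2) * h s (x - z))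
        (fun x z => bes 0 ((t - s) ^ 2 - z ^ 2) * h' s (x - z)) ?_ ?_ ?_ _ _ _
      · have := hh s
        simp only [Function.uncurry_def]
        fun_prop
      · have := hh' s
        simp only [Function.uncurry_def]
        fun_prop
      · intro x z
        exact HasDerivAt.const_mul _ ((hd s (x - z)).comp_sub_const x z)) 1 t x
  refine HasDerivAt.congr_deriv (f := UU h t) key ?_
  unfold DU
  apply intervalIntegral.integral_congr
  intro s _
  simp only
  congr 1
  have ibp := intervalIntegral.integral_eq_sub_of_hasDerivAt (a := -(t - s)) (b := t - s)
    (f := fun z => bes 0 ((t - s) ^ 2 - z ^ 2) * h s (x - z))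
    (f' := fun z => z / 2 * bes 1 ((t - s) ^ 2 - z ^ 2) * h s (x - z)
      - bes 0 ((t - s) ^ 2 - z ^ 2) * h' s (x - z))
    (by
      intro z _
      have d1 := (bes_comp 0 (t - s) z).2
      have d2 : HasDerivAt (fun z => h s (x - z)) (-(h' s (x - z))) z :=
        (hd s (x - z)).comp_const_sub x z
      refine (d1.mul d2).congr_deriv ?_
      simp only [zero_add]
      ring)
    (by
      apply Continuous.intervalIntegrable
      have := hh s
      have := hh' s
      fun_prop)
  rw [intervalIntegral.integral_sub] at ibp
  · simp only [neg_sq, sub_self, bes_zero_zero, sub_neg_eq_add] at ibp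
    linarith
  · apply Continuous.intervalIntegrable
    have := hh s
    fun_prop
  · apply Continuous.intervalIntegrable
    have := hh' s
    fun_prop

theorem hext (β : SchwartzMap ℝ ℝ) (u : ℝ → ℝ → ℝ)
    (hu : ContDiffOn ℝ (⊤ : ℕ∞) (fun p : ℝ × ℝ => u p.1 p.2) {p : ℝ × ℝ | 1 ≤ p.1}) :
    ∃ h h' : ℝ → ℝ → ℝ, Continuous (Function.uncurry h) ∧ Continuous (Function.uncurry h') ∧
      (∀ s y, HasDerivAt (h s) (h' s y) y) ∧ ∀ s, 1 ≤ s → ∀ y, h s y = β y * u s y ^ 3 := by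
  set S : Set (ℝ × ℝ) := {p : ℝ × ℝ | 1 ≤ p.1} with hS
  set V : ℝ × ℝ → ℝ := fun p => u p.1 p.2 with hV
  have hSu : UniqueDiffOn ℝ S := by
    have : S = Set.Ici 1 ×ˢ Set.univ := by ext p; simp [hS]
    rw [this]
    exact (uniqueDiffOn_Ici 1).prod uniqueDiffOn_univ
  have hm : ∀ s y : ℝ, ((max s 1, y) : ℝ × ℝ) ∈ S := fun s y => by
    show 1 ≤ max s 1
    exact le_max_right s 1
  have c1 : Continuous (fun p : ℝ × ℝ => u (max p.1 1) p.2) :=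
    hu.continuousOn.comp_continuous (f := fun p : ℝ × ℝ => ((max p.1 1, p.2) : ℝ × ℝ))
      (by fun_prop) (fun p => hm _ _)
  have c2 : Continuous (fun p : ℝ × ℝ => fderivWithin ℝ V S (max p.1 1, p.2)) :=
    (hu.continuousOn_fderivWithin hSu (by simp)).comp_continuous
      (f := fun p : ℝ × ℝ => ((max p.1 1, p.2) : ℝ × ℝ)) (by fun_prop) (fun p => hm _ _)
  have d1 : ∀ s y, HasDerivAt (fun y => u (max s 1) y)
      (fderivWithin ℝ V S (max s 1, y) (0, 1)) y := by
    intro s y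
    have f1 : HasFDerivWithinAt V (fderivWithin ℝ V S (max s 1, y)) S (max s 1, y) :=
      ((hu.differentiableOn (by simp)) _ (hm s y)).hasFDerivWithinAt
    have f2 : HasDerivWithinAt (fun y : ℝ => ((max s 1, y) : ℝ × ℝ)) (0, 1) Set.univ y :=
      ((hasDerivAt_const y (max s 1)).prodMk (hasDerivAt_id y)).hasDerivWithinAt
    have f3 := HasFDerivWithinAt.comp_hasDerivWithinAt (f := fun y : ℝ => ((max s 1, y) : ℝ × ℝ))
      y f1 f2 (fun y _ => hm s y)
    rw [hasDerivWithinAt_univ] at f3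
    exact f3
  have hβ : ContDiff ℝ 1 β := β.smooth 1
  have hβ' : Continuous (deriv β) := hβ.continuous_deriv (by norm_num)
  have hβc : Continuous β := β.continuous
  refine ⟨fun s y => β y * u (max s 1) y ^ 3, fun s y => deriv β y * u (max s 1) y ^ 3
    + β y * (3 * u (max s 1) y ^ 2 * fderivWithin ℝ V S (max s 1, y) (0, 1)), ?_, ?_, ?_, ?_⟩
  · exact (hβc.comp continuous_snd).mul (c1.pow 3)
  · have c3 : Continuous (fun p : ℝ × ℝ => fderivWithin ℝ V S (max p.1 1, p.2) (0, 1)) :=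
      c2.clm_apply continuous_const
    exact ((hβ'.comp continuous_snd).mul (c1.pow 3)).add
      ((hβc.comp continuous_snd).mul ((continuous_const.mul (c1.pow 2)).mul c3))
  · intro s y
    have := ((hβ.differentiable (by norm_num)) y).hasDerivAt
    refine (this.mul ((d1 s y).pow 3)).congr_deriv ?_
    norm_num
  · intro s hs y
    simp [max_eq_left hs]

theorem u1_eq (β : SchwartzMap ℝ ℝ) (u h : ℝ → ℝ → ℝ) (hc : Continuous (Function.uncurry h))
    (he : ∀ s, 1 ≤ s → ∀ y, h s y = β y * u s y ^ 3)
    (hb : ∀ s, 1 ≤ s → ∃ M, ∀ y, |u s y| ≤ M) (t x : ℝ) (ht : 1 ≤ t) :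
    u1 (fun z => β z) u t x = UU h t x := by
  unfold u1 UU
  apply intervalIntegral.integral_congr
  intro s hs
  rw [Set.uIcc_of_le ht] at hs
  have e : (fun z => β z * u s z ^ 3) = h s := by ext z; rw [he s hs.1]
  have hh : Continuous (h s) := hc.comp (Continuous.prodMk_right s)
  obtain ⟨M, hM⟩ := hb s hs.1
  have hM0 : 0 ≤ M := (abs_nonneg _).trans (hM 0)
  have bd : ∀ y, |h s y| ≤ M ^ 3 * |β y| := by
    intro y
    rw [he s hs.1, abs_mul, abs_pow, mul_comm]
    gcongr
    exact hM y
  have hβi : Integrable (fun y => β y) := β.integrable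
  simp only
  rw [e]
  obtain ⟨B, hB⟩ : ∃ B, ∀ y, |β y| ≤ B := by
    obtain ⟨B, hB⟩ := β.decay 0 0
    exact ⟨B, fun y => by simpa using hB.2 y⟩
  refine KGprop_eq (t - s) (by linarith [hs.2]) (h s) hh ?_ (M ^ 3 * B) ?_ x
  · exact Integrable.mono' (hβi.abs.const_mul _) hh.aestronglyMeasurable
      (Filter.Eventually.of_forall bd)
  · intro y
    exact (bd y).trans (by gcongr; exact hB y)
open MeasureTheory

theorem rpow_half_bound {t s a : ℝ} (ht : 1 ≤ t) (hs : t / 2 ≤ s) (ha : 0 ≤ a) (ha2 : a ≤ 2) :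
    s ^ (-a) ≤ 4 * t ^ (-a) := by
  have h1 : s ^ (-a) ≤ (t / 2) ^ (-a) :=
    Real.rpow_le_rpow_of_nonpos (by linarith) hs (by linarith)
  refine h1.trans ?_
  rw [Real.div_rpow (by linarith) (by norm_num), Real.rpow_neg (by norm_num : (0:ℝ) ≤ 2),
    div_inv_eq_mul, mul_comm]
  gcongr
  calc (2:ℝ) ^ a ≤ 2 ^ (2:ℝ) := Real.rpow_le_rpow_of_exponent_le (by norm_num) ha2
    _ = 4 := by norm_num

theorem cont_s {t : ℝ} (ht : 1 ≤ t) (a : ℝ) : ContinuousOn (fun s : ℝ => s ^ a) (Set.uIcc 1 t) := by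
  rw [Set.uIcc_of_le ht]
  intro s hs
  exact (Real.continuousAt_rpow_const _ _ (Or.inl (by linarith [hs.1]))).continuousWithinAt

theorem cont_τ {t : ℝ} (ht : 1 ≤ t) (a : ℝ) :
    ContinuousOn (fun s : ℝ => (1 + (t - s)) ^ a) (Set.uIcc 1 t) := by
  rw [Set.uIcc_of_le ht]
  refine ContinuousOn.rpow_const (by fun_prop) ?_
  intro s hs
  left
  have := hs.2
  have : (1:ℝ) ≤ 1 + (t - s) := by linarith
  linarith

theorem int_s {t : ℝ} (ht : 1 ≤ t) : ∫ s in (1:ℝ)..t, s ^ (-(3/2) : ℝ) ≤ 2 := by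
  rw [integral_rpow (Or.inr ⟨by norm_num, by rw [Set.uIcc_of_le ht]; intro h; linarith [h.1]⟩)]
  have : 0 ≤ t ^ ((-(3/2) : ℝ) + 1) := by positivity
  rw [Real.one_rpow]
  have e : ((-(3/2) : ℝ) + 1) = -(1/2) := by norm_num
  rw [e] at *
  rw [div_le_iff_of_neg (by norm_num)]
  linarith

theorem int_τ_eq {t : ℝ} (a : ℝ) : ∫ s in (1:ℝ)..t, (1 + (t - s)) ^ a = ∫ s in (1:ℝ)..t, s ^ a := by
  have := intervalIntegral.integral_comp_sub_left (a := 1) (b := t) (fun s : ℝ => s ^ a) (1 + t)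
  simp only [add_sub_cancel_right, add_sub_cancel_left] at this
  rw [← this]
  simp only [add_sub_assoc]

theorem time_est (a : ℝ) (ha : 0 ≤ a) (ha2 : a ≤ 2) {t : ℝ} (ht : 1 ≤ t)
    (Q : ℝ) (hQ : ∫ s in (1:ℝ)..t, s ^ (-a) ≤ Q) :
    ∫ s in (1:ℝ)..t, s ^ (-(3/2) : ℝ) * (1 + (t - s)) ^ (-a)
      ≤ 4 * t ^ (-(3/2) : ℝ) * Q + 8 * t ^ (-a) := by
  have c1 := cont_s ht (-(3/2) : ℝ)
  have c2 := cont_τ ht (-a)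
  have h1 : ∫ s in (1:ℝ)..t, s ^ (-(3/2) : ℝ) * (1 + (t - s)) ^ (-a)
      ≤ ∫ s in (1:ℝ)..t, (4 * t ^ (-(3/2) : ℝ) * (1 + (t - s)) ^ (-a)
        + 4 * t ^ (-a) * s ^ (-(3/2) : ℝ)) := by
    refine intervalIntegral.integral_mono_on ht (c1.mul c2).intervalIntegrable
      ((continuousOn_const.mul c2).add (continuousOn_const.mul c1)).intervalIntegrable ?_
    intro s hs
    have p1 : 0 ≤ s ^ (-(3/2) : ℝ) := Real.rpow_nonneg (by linarith [hs.1]) _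
    have p2 : 0 ≤ (1 + (t - s)) ^ (-a) := Real.rpow_nonneg (by linarith [hs.2]) _
    have p3 : 0 ≤ t ^ (-(3/2) : ℝ) := by positivity
    have p4 : 0 ≤ t ^ (-a) := by positivity
    rcases le_total (t / 2) s with h | h
    · have := rpow_half_bound (a := 3/2) ht h (by norm_num) (by norm_num)
      have := mul_le_mul_of_nonneg_right this p2
      have := mul_nonneg p4 p1
      linarith
    · have := rpow_half_bound (s := 1 + (t - s)) ht (by linarith) ha ha2
      have := mul_le_mul_of_nonneg_left this p1
      have := mul_nonneg p3 p2
      linarith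
  refine h1.trans ?_
  rw [intervalIntegral.integral_add (c2.intervalIntegrable.const_mul _)
    (c1.intervalIntegrable.const_mul _), intervalIntegral.integral_const_mul,
    intervalIntegral.integral_const_mul, int_τ_eq]
  have p3 : 0 ≤ 4 * t ^ (-(3/2) : ℝ) := by positivity
  have p4 : 0 ≤ 4 * t ^ (-a) := by positivity
  have q1 := mul_le_mul_of_nonneg_left hQ p3
  have q2 := mul_le_mul_of_nonneg_left (int_s ht) p4
  linarith

theorem time1 {t : ℝ} (ht : 1 ≤ t) :
    ∫ s in (1:ℝ)..t, s ^ (-(3/2) : ℝ) * (1 + (t - s)) ^ (-(1/2) : ℝ) ≤ 16 * t ^ (-(1/2) : ℝ) := by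
  have hQ : ∫ s in (1:ℝ)..t, s ^ (-(1/2) : ℝ) ≤ 2 * t ^ (1/2 : ℝ) := by
    rw [integral_rpow (Or.inl (by norm_num)), Real.one_rpow]
    have e : ((-(1/2) : ℝ) + 1) = 1/2 := by norm_num
    rw [e]
    linarith
  refine (time_est (1/2) (by norm_num) (by norm_num) ht _ hQ).trans ?_
  have : t ^ (-(3/2) : ℝ) * t ^ (1/2 : ℝ) = t ^ (-1 : ℝ) := by
    rw [← Real.rpow_add (by linarith)]; norm_num
  have h2 : t ^ (-1 : ℝ) ≤ t ^ (-(1/2) : ℝ) := Real.rpow_le_rpow_of_exponent_le ht (by norm_num)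
  linarith

theorem time2 {t : ℝ} (ht : 1 ≤ t) :
    ∫ s in (1:ℝ)..t, s ^ (-(3/2) : ℝ) * (1 + (t - s)) ^ (-(3/2) : ℝ) ≤ 16 * t ^ (-(3/2) : ℝ) := by
  refine (time_est (3/2) (by norm_num) (by norm_num) ht _ (int_s ht)).trans ?_
  linarith

theorem int_inv_le (a b x : ℝ) : ∫ z in a..b, (1 + (x - z) ^ 2)⁻¹ ≤ Real.pi := by
  rw [intervalIntegral.integral_comp_sub_left (fun y : ℝ => (1 + y ^ 2)⁻¹) x, integral_inv_one_add_sq]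
  have := Real.arctan_lt_pi_div_two (x - a)
  have := Real.neg_pi_div_two_lt_arctan (x - b)
  linarith

theorem past {R t x s z : ℝ} (hR : t ^ 2 - x ^ 2 ≤ R ^ 2) (hs : 0 ≤ s)
    (hz : z ∈ Set.Icc (-(t - s)) (t - s)) : s ^ 2 - (x - z) ^ 2 ≤ R ^ 2 := by
  have hz1 := hz.1
  have hz2 := hz.2
  rcases le_or_gt s |x - z| with h | h
  · have : s ^ 2 ≤ (x - z) ^ 2 := by rw [← sq_abs (x - z)]; gcongr
    nlinarith [sq_nonneg R]
  · have h1 := abs_lt.1 h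
    have : s ^ 2 - (x - z) ^ 2 ≤ t ^ 2 - x ^ 2 := by
      nlinarith [mul_nonneg (by linarith : 0 ≤ (t - s) - z) (by linarith [h1.1] : 0 ≤ s + (x - z)),
        mul_nonneg (by linarith : 0 ≤ (t - s) + z) (by linarith [h1.2] : 0 ≤ s - (x - z)),
        mul_nonneg (by linarith : 0 ≤ (t - s) - z) (by linarith : 0 ≤ (t - s) + z)]
    linarith

theorem jap_prod (x z : ℝ) : 1 + z ^ 2 ≤ 2 * (1 + x ^ 2) * (1 + (x - z) ^ 2) := by
  nlinarith [sq_nonneg (2 * x - z), sq_nonneg (x * (x - z))]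

theorem jap_prod2 (x z : ℝ) : ((1 + x ^ 2)⁻¹ : ℝ) * ((1 + (x - z) ^ 2) ^ 2)⁻¹
    ≤ 2 * (1 + z ^ 2)⁻¹ * (1 + (x - z) ^ 2)⁻¹ := by
  have h := jap_prod x z
  have a : 0 < 1 + x ^ 2 := by positivity
  have b : 0 < 1 + (x - z) ^ 2 := by positivity
  have c : 0 < 1 + z ^ 2 := by positivity
  rw [← mul_inv, ← div_eq_mul_inv, ← div_eq_mul_inv, div_div, inv_eq_one_div,
    div_le_div_iff₀ (by positivity) (by positivity)]
  nlinarith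
open MeasureTheory

theorem jap_rpow (x : ℝ) : jap x ^ (-(2:ℝ)) = (1 + x ^ 2)⁻¹ := by
  unfold jap
  rw [Real.rpow_neg (Real.sqrt_nonneg _)]
  norm_cast
  rw [Real.sq_sqrt (by positivity)]

theorem wL2_le (t R A : ℝ) (hA : 0 ≤ A) (h : ℝ → ℝ)
    (H : ∫⁻ x in {x : ℝ | t ^ 2 - x ^ 2 ≤ R ^ 2}, ENNReal.ofReal (((1 + x ^ 2)⁻¹ * |h x|) ^ 2)
      ≤ ENNReal.ofReal (A ^ 2)) : wL2 t R h ≤ A := by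
  unfold wL2
  rw [Real.sqrt_le_left hA]
  have h1 := enorm_integral_le_lintegral_enorm
    (μ := volume.restrict {x : ℝ | t ^ 2 - x ^ 2 ≤ R ^ 2})
    (fun x => (jap x ^ (-(2 : ℝ)) * h x) ^ 2)
  have h2 : ∀ x : ℝ, ‖(jap x ^ (-(2 : ℝ)) * h x) ^ 2‖ₑ
      = ENNReal.ofReal (((1 + x ^ 2)⁻¹ * |h x|) ^ 2) := by
    intro x
    rw [jap_rpow, Real.enorm_eq_ofReal (by positivity), mul_pow, mul_pow, sq_abs]
  simp only [h2] at h1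
  have h3 := h1.trans H
  rw [Real.enorm_eq_ofReal (by positivity)] at h3
  exact (ENNReal.ofReal_le_ofReal_iff (by positivity)).1 h3

theorem lint_inv (c : ℝ) : ∫⁻ x : ℝ, ENNReal.ofReal ((1 + (x - c) ^ 2)⁻¹) = ENNReal.ofReal Real.pi := by
  rw [lintegral_sub_right_eq_self (fun x : ℝ => ENNReal.ofReal ((1 + x ^ 2)⁻¹)) c,
    ← ofReal_integral_eq_lintegral_ofReal integrable_inv_one_add_sq
    (Filter.Eventually.of_forall fun x => by positivity), integral_univ_inv_one_add_sq]

theorem bes0_bd {τ z : ℝ} (hτ : 0 ≤ τ) (hz : z ∈ Set.Icc (-τ) τ) :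
    (1 + (τ ^ 2 - z ^ 2)) ^ (-(1/4) : ℝ) ≤ 2 * (1 + τ) ^ (-(1/2) : ℝ) * jap z := by
  have hr : 0 ≤ τ ^ 2 - z ^ 2 := by nlinarith [hz.1, hz.2]
  set b := 1 + (τ ^ 2 - z ^ 2) with hb
  have hb1 : 1 ≤ b := by linarith
  have hX : (1 + τ) ^ 2 ≤ b * (2 * (1 + z ^ 2)) := by
    have : 0 ≤ z ^ 2 * (τ ^ 2 - z ^ 2) := by positivity
    nlinarith [sq_nonneg (1 - τ)]
  have e1 : (b * (2 * (1 + z ^ 2))) ^ (-(1/4) : ℝ) ≤ (1 + τ) ^ (-(1/2) : ℝ) := by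
    have := Real.rpow_le_rpow_of_nonpos (by positivity) hX (by norm_num : (-(1/4) : ℝ) ≤ 0)
    refine this.trans (le_of_eq ?_)
    rw [← Real.rpow_natCast, ← Real.rpow_mul (by linarith)]
    norm_num
  have e2 : (2 * (1 + z ^ 2)) ^ (1/4 : ℝ) ≤ 2 * jap z := by
    have h1 : (1:ℝ) ≤ 2 * (1 + z ^ 2) := by nlinarith [sq_nonneg z]
    calc (2 * (1 + z ^ 2)) ^ (1/4 : ℝ) ≤ (2 * (1 + z ^ 2)) ^ (1/2 : ℝ) :=
          Real.rpow_le_rpow_of_exponent_le h1 (by norm_num)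
      _ = Real.sqrt (2 * (1 + z ^ 2)) := by rw [Real.sqrt_eq_rpow]
      _ ≤ Real.sqrt (2 ^ 2 * (1 + z ^ 2)) := by
          apply Real.sqrt_le_sqrt
          nlinarith [sq_nonneg z]
      _ = 2 * jap z := by
          rw [Real.sqrt_mul (by norm_num), Real.sqrt_sq (by norm_num)]; rfl
  have e3 : b ^ (-(1/4) : ℝ) = (b * (2 * (1 + z ^ 2))) ^ (-(1/4) : ℝ) * (2 * (1 + z ^ 2)) ^ (1/4 : ℝ) := by
    rw [Real.mul_rpow (by linarith) (by positivity), mul_assoc, ← Real.rpow_add (by positivity)]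
    norm_num
  rw [e3]
  calc _ ≤ (1 + τ) ^ (-(1/2) : ℝ) * (2 * jap z) := by gcongr
    _ = _ := by ring

theorem jap_bd (x z : ℝ) : jap z ≤ 2 * jap x * (1 + (x - z) ^ 2) := by
  have h := jap_prod x z
  unfold jap
  rw [Real.sqrt_le_left (by positivity)]
  rw [mul_pow, mul_pow, Real.sq_sqrt (by positivity)]
  have : 0 ≤ (1 + x ^ 2) * (1 + (x - z) ^ 2) * (x - z) ^ 2 := by positivity
  have : 0 ≤ (1 + x ^ 2) * (1 + (x - z) ^ 2) := by positivity
  nlinarith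

theorem est1 : ∃ C > (0:ℝ), ∀ (h : ℝ → ℝ → ℝ) (K t R : ℝ), 0 ≤ K → 1 ≤ t →
    (∀ s ∈ Set.Icc 1 t, ∀ y, s ^ 2 - y ^ 2 ≤ R ^ 2 →
      |h s y| ≤ K * s ^ (-(3/2) : ℝ) * ((1 + y ^ 2) ^ 2)⁻¹) →
    wL2 t R (UU h t) ≤ C * K * t ^ (-(1/2) : ℝ) := by
  obtain ⟨Cb, hCb, hbes⟩ := bes_decay
  refine ⟨64 * Real.pi * Cb * Real.sqrt Real.pi, by positivity, ?_⟩
  intro h K t R hK ht hh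
  have pt : ∀ x, t ^ 2 - x ^ 2 ≤ R ^ 2 →
      |UU h t x| ≤ (64 * Real.pi * Cb) * K * t ^ (-(1/2) : ℝ) * jap x := by
    intro x hx
    have hj : 0 ≤ jap x := Real.sqrt_nonneg _
    have inner : ∀ s ∈ Set.Icc 1 t, |1 / 2 * ∫ z in (-(t - s))..(t - s),
        bes 0 ((t - s) ^ 2 - z ^ 2) * h s (x - z)|
        ≤ 4 * Real.pi * Cb * K * jap x * (s ^ (-(3/2) : ℝ) * (1 + (t - s)) ^ (-(1/2) : ℝ)) := by
      intro s hs
      have hs1 := hs.1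
      have hτ : 0 ≤ t - s := by linarith [hs.2]
      have ps : 0 ≤ s ^ (-(3/2) : ℝ) := by positivity
      have pτ : 0 ≤ (1 + (t - s)) ^ (-(1/2) : ℝ) := by positivity
      set Q := 4 * Cb * K * jap x * (s ^ (-(3/2) : ℝ) * (1 + (t - s)) ^ (-(1/2) : ℝ)) with hQ
      have hQ0 : 0 ≤ Q := by positivity
      have b1 : ‖∫ z in (-(t - s))..(t - s), bes 0 ((t - s) ^ 2 - z ^ 2) * h s (x - z)‖
          ≤ ∫ z in (-(t - s))..(t - s), Q * (1 + (x - z) ^ 2)⁻¹ := by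
        apply intervalIntegral.norm_integral_le_of_norm_le (by linarith)
        · refine Filter.Eventually.of_forall fun z hz => ?_
          have hz' : z ∈ Set.Icc (-(t - s)) (t - s) := ⟨hz.1.le, hz.2⟩
          have hr : 0 ≤ (t - s) ^ 2 - z ^ 2 := by nlinarith [hz'.1, hz'.2]
          have a1 := (hbes _ hr).1
          have a2 := bes0_bd hτ hz'
          have a3 := hh s hs (x - z) (past hx (by linarith) hz')
          have a4 := jap_bd x z
          rw [norm_mul, Real.norm_eq_abs, Real.norm_eq_abs]
          have hy : 0 < 1 + (x - z) ^ 2 := by positivity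
          calc _ ≤ (Cb * (2 * (1 + (t - s)) ^ (-(1/2) : ℝ) * (2 * jap x * (1 + (x - z) ^ 2))))
              * (K * s ^ (-(3/2) : ℝ) * ((1 + (x - z) ^ 2) ^ 2)⁻¹) := by
                gcongr
                refine a1.trans ?_
                gcongr
                refine a2.trans ?_
                gcongr
            _ = Q * (1 + (x - z) ^ 2)⁻¹ := by
                rw [hQ]
                field_simp
                ring
        · apply Continuous.intervalIntegrable
          refine continuous_const.mul (Continuous.inv₀ (by fun_prop) fun z => by positivity)
      rw [intervalIntegral.integral_const_mul] at b1
      have b2 := mul_le_mul_of_nonneg_left (int_inv_le (-(t - s)) (t - s) x) hQ0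
      rw [abs_mul, abs_of_pos (by norm_num : (0:ℝ) < 1 / 2), ← Real.norm_eq_abs (intervalIntegral _ _ _ _)]
      have b3 : 0 ≤ Q * Real.pi := by positivity
      have : 4 * Real.pi * Cb * K * jap x * (s ^ (-(3/2) : ℝ) * (1 + (t - s)) ^ (-(1/2) : ℝ)) = Q * Real.pi := by
        rw [hQ]; ring
      rw [this]
      linarith
    have c0 : ContinuousOn (fun s : ℝ => 4 * Real.pi * Cb * K * jap x *
        (s ^ (-(3/2) : ℝ) * (1 + (t - s)) ^ (-(1/2) : ℝ))) (Set.uIcc 1 t) :=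
      continuousOn_const.mul ((cont_s ht _).mul (cont_τ ht _))
    have c1 : ‖UU h t x‖ ≤ _ := intervalIntegral.norm_integral_le_of_norm_le ht
      (Filter.Eventually.of_forall fun s hs => inner s ⟨hs.1.le, hs.2⟩) c0.intervalIntegrable
    rw [intervalIntegral.integral_const_mul, Real.norm_eq_abs] at c1
    refine c1.trans ?_
    have c2 := mul_le_mul_of_nonneg_left (time1 ht)
      (by positivity : 0 ≤ 4 * Real.pi * Cb * K * jap x)
    refine c2.trans (le_of_eq (by ring))
  set D := (64 * Real.pi * Cb) * K * t ^ (-(1/2) : ℝ) with hD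
  have hD0 : 0 ≤ D := by positivity
  have e : 64 * Real.pi * Cb * Real.sqrt Real.pi * K * t ^ (-(1/2) : ℝ) = D * Real.sqrt Real.pi := by
    rw [hD]; ring
  rw [e]
  apply wL2_le _ _ _ (by positivity)
  have hS : MeasurableSet {x : ℝ | t ^ 2 - x ^ 2 ≤ R ^ 2} :=
    measurableSet_le (by fun_prop) (by fun_prop)
  calc _ ≤ ∫⁻ x in {x : ℝ | t ^ 2 - x ^ 2 ≤ R ^ 2},
        ENNReal.ofReal (D ^ 2) * ENNReal.ofReal ((1 + (x - 0) ^ 2)⁻¹) := by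
        apply setLIntegral_mono' hS
        intro x hx
        rw [← ENNReal.ofReal_mul (by positivity)]
        apply ENNReal.ofReal_le_ofReal
        have h1 := pt x hx
        have h2 : ((1 + x ^ 2)⁻¹ * |UU h t x|) ^ 2 ≤ ((1 + x ^ 2)⁻¹ * (D * jap x)) ^ 2 := by gcongr
        refine h2.trans (le_of_eq ?_)
        rw [mul_pow, mul_pow, jap, Real.sq_sqrt (by positivity), sub_zero]
        field_simp
    _ ≤ ∫⁻ x, ENNReal.ofReal (D ^ 2) * ENNReal.ofReal ((1 + (x - 0) ^ 2)⁻¹) :=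
        setLIntegral_le_lintegral _ _
    _ = ENNReal.ofReal ((D * Real.sqrt Real.pi) ^ 2) := by
        rw [lintegral_const_mul' _ _ ENNReal.ofReal_ne_top, lint_inv,
          ← ENNReal.ofReal_mul (by positivity), mul_pow D (Real.sqrt Real.pi) 2,
          Real.sq_sqrt Real.pi_pos.le]
open MeasureTheory

theorem cs_w {α : Type*} [MeasurableSpace α] (μ : Measure α) (F w : α → ENNReal)
    (hF : AEMeasurable F μ) (hw : AEMeasurable w μ) (hw0 : ∀ᵐ a ∂μ, w a ≠ 0)
    (hwt : ∀ᵐ a ∂μ, w a ≠ ⊤) :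
    (∫⁻ a, F a ∂μ) ^ 2 ≤ (∫⁻ a, w a ∂μ) * ∫⁻ a, F a ^ 2 / w a ∂μ := by
  have h := ENNReal.lintegral_mul_le_Lp_mul_Lq μ (p := 2) (q := 2) Real.HolderConjugate.two_two
    (f := fun a => w a ^ (1/2 : ℝ)) (g := fun a => F a * (w a ^ (1/2 : ℝ))⁻¹)
    (hw.pow_const _) (hF.mul (hw.pow_const _).inv)
  have e1 : ∫⁻ a, ((fun a => w a ^ (1/2 : ℝ)) * fun a => F a * (w a ^ (1/2 : ℝ))⁻¹) a ∂μ
      = ∫⁻ a, F a ∂μ := by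
    apply lintegral_congr_ae
    filter_upwards [hw0, hwt] with a h0 h1
    simp only [Pi.mul_apply]
    rw [mul_comm, mul_assoc, ENNReal.inv_mul_cancel, mul_one]
    · simp [h0, h1]
    · simp [h0, h1]
  have e2 : ∀ a, (w a ^ (1/2 : ℝ)) ^ (2:ℝ) = w a := by
    intro a
    rw [← ENNReal.rpow_mul]; norm_num
  have e3 : ∀ a, (F a * (w a ^ (1/2 : ℝ))⁻¹) ^ (2:ℝ) = F a ^ 2 / w a := by
    intro a
    rw [ENNReal.mul_rpow_of_nonneg _ _ (by norm_num), ENNReal.inv_rpow, e2, div_eq_mul_inv]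
    norm_num
  rw [e1] at h
  simp only [e2, e3] at h
  calc (∫⁻ a, F a ∂μ) ^ 2
      ≤ ((∫⁻ a, w a ∂μ) ^ (1 / 2 : ℝ) * (∫⁻ a, F a ^ 2 / w a ∂μ) ^ (1 / 2 : ℝ)) ^ 2 := by gcongr
    _ = _ := by
      rw [mul_pow, ← ENNReal.rpow_natCast, ← ENNReal.rpow_natCast, ← ENNReal.rpow_mul,
        ← ENNReal.rpow_mul]
      norm_num

theorem mink (μ : Measure ℝ) [SFinite μ] (F : ℝ → ℝ → ENNReal) (w : ℝ → ENNReal)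
    (hF : Measurable (Function.uncurry F)) (hw : Measurable w) (hw0 : ∀ᵐ a ∂μ, w a ≠ 0)
    (hwt : ∀ᵐ a ∂μ, w a ≠ ⊤) (h : ∀ᵐ s ∂μ, ∫⁻ x, F s x ^ 2 ≤ w s ^ 2) :
    ∫⁻ x, (∫⁻ s, F s x ∂μ) ^ 2 ≤ (∫⁻ s, w s ∂μ) ^ 2 := by
  have hFx : ∀ x, Measurable fun s => F s x := fun x => hF.comp measurable_prodMk_right
  have hFs : ∀ s, Measurable (F s) := fun s => hF.comp measurable_prodMk_left
  have hm : Measurable (Function.uncurry fun x s => F s x ^ 2 / w s) :=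
    ((hF.comp measurable_swap).pow_const 2).div (hw.comp measurable_snd)
  calc ∫⁻ x, (∫⁻ s, F s x ∂μ) ^ 2
      ≤ ∫⁻ x, (∫⁻ s, w s ∂μ) * ∫⁻ s, F s x ^ 2 / w s ∂μ :=
        lintegral_mono fun x => cs_w μ _ w (hFx x).aemeasurable hw.aemeasurable hw0 hwt
    _ = (∫⁻ s, w s ∂μ) * ∫⁻ x, ∫⁻ s, F s x ^ 2 / w s ∂μ :=
        lintegral_const_mul _ (Measurable.lintegral_prod_right hm)
    _ = (∫⁻ s, w s ∂μ) * ∫⁻ s, (∫⁻ x, F s x ^ 2 / w s) ∂μ := by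
        rw [lintegral_lintegral_swap hm.aemeasurable]
    _ ≤ (∫⁻ s, w s ∂μ) * ∫⁻ s, w s ∂μ := by
        gcongr 1
        apply lintegral_mono_ae
        filter_upwards [h, hw0, hwt] with s h1 h2 h3
        simp only [div_eq_mul_inv]
        rw [lintegral_mul_const _ ((hFs s).pow_const 2)]
        calc _ ≤ w s ^ 2 * (w s)⁻¹ := by gcongr
          _ = w s := by rw [sq, mul_assoc, ENNReal.mul_inv_cancel h2 h3, mul_one]
    _ = _ := (sq _).symm

theorem three_sq (p q r : ENNReal) : (p + q + r) ^ 2 ≤ 9 * (p ^ 2 + q ^ 2 + r ^ 2) := by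
  have h : ∀ m : ENNReal, p ≤ m → q ≤ m → r ≤ m → (p + q + r) ^ 2 ≤ 9 * m ^ 2 := by
    intro m h1 h2 h3
    calc (p + q + r) ^ 2 ≤ (m + m + m) ^ 2 := by gcongr
      _ = 9 * m ^ 2 := by ring
  rcases le_total p q with a | a <;> rcases le_total q r with b | b <;> rcases le_total p r with c | c
  all_goals first
    | exact (h r c b le_rfl).trans (by gcongr; exact le_add_left le_rfl)
    | exact (h q a le_rfl b).trans (by gcongr; exact le_add_right (le_add_left le_rfl))
    | exact (h p le_rfl a c).trans (by gcongr; exact le_add_right (le_add_right le_rfl))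
    | exact (h r (a.trans b) b le_rfl).trans (by gcongr; exact le_add_left le_rfl)
    | exact (h p le_rfl a (b.trans a)).trans (by gcongr; exact le_add_right (le_add_right le_rfl))

theorem int_b {τ : ℝ} :
    ∫ z in (-τ)..τ, ((1 + (τ ^ 2 - z ^ 2)) * Real.sqrt (1 + (τ ^ 2 - z ^ 2)))⁻¹
      = 2 * τ / (1 + τ ^ 2) := by
  have hb : ∀ z ∈ Set.uIcc (-τ) τ, 0 < 1 + (τ ^ 2 - z ^ 2) := by
    intro z hz
    have : z ^ 2 ≤ τ ^ 2 := by
      rcases le_total 0 τ with h | h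
      · rw [Set.uIcc_of_le (by linarith)] at hz
        nlinarith [hz.1, hz.2]
      · rw [Set.uIcc_of_ge (by linarith)] at hz
        nlinarith [hz.1, hz.2]
    linarith
  rw [intervalIntegral.integral_eq_sub_of_hasDerivAt
    (f := fun z => z / ((1 + τ ^ 2) * Real.sqrt (1 + (τ ^ 2 - z ^ 2))))]
  · simp only [neg_sq, sub_self, add_zero, Real.sqrt_one, mul_one]
    ring
  · intro z hz
    have h0 := hb z hz
    have d1 : HasDerivAt (fun z : ℝ => 1 + (τ ^ 2 - z ^ 2)) (-(2 * z)) z := by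
      refine (((hasDerivAt_pow 2 z).const_sub (τ ^ 2)).const_add 1).congr_deriv ?_
      norm_num
    have d2 := d1.sqrt h0.ne'
    have hsq := Real.sq_sqrt h0.le
    have hs : 0 < Real.sqrt (1 + (τ ^ 2 - z ^ 2)) := Real.sqrt_pos.2 h0
    have hT : 0 < 1 + τ ^ 2 := by positivity
    refine ((hasDerivAt_id z).div (d2.const_mul (1 + τ ^ 2)) (by positivity)).congr_deriv ?_
    simp only [id]
    set r := Real.sqrt (1 + (τ ^ 2 - z ^ 2)) with hr
    rw [← hsq]
    field_simp
    have : τ ^ 2 = r ^ 2 + z ^ 2 - 1 := by linarith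
    rw [this]
    ring
  · apply ContinuousOn.intervalIntegrable
    refine ContinuousOn.inv₀ (by fun_prop) ?_
    intro z hz
    have h0 := hb z hz
    have hs : 0 < Real.sqrt (1 + (τ ^ 2 - z ^ 2)) := Real.sqrt_pos.2 h0
    positivity
open MeasureTheory

noncomputable def Gr (τ z : ℝ) : ℝ := (jap z)⁻¹ * (1 + |τ ^ 2 - z ^ 2|) ^ (-(3/4) : ℝ)

theorem jap_pos (z : ℝ) : 0 < jap z := Real.sqrt_pos.2 (by positivity)

theorem jap_sq (z : ℝ) : jap z ^ 2 = 1 + z ^ 2 := Real.sq_sqrt (by positivity)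

theorem jap_cont : Continuous jap := by unfold jap; fun_prop

theorem Gr_cont : Continuous (fun p : ℝ × ℝ => Gr p.1 p.2) := by
  unfold Gr
  refine Continuous.mul (Continuous.inv₀ (jap_cont.comp continuous_snd) fun p => (jap_pos _).ne') ?_
  refine Continuous.rpow_const (by fun_prop) fun p => Or.inl ?_
  positivity

theorem Gr_nonneg (τ z : ℝ) : 0 ≤ Gr τ z := by
  unfold Gr
  have := jap_pos z
  positivity

theorem Gr_sq_le {τ z : ℝ} (hτ : 0 ≤ τ) (hz : z ∈ Set.Icc (-τ) τ) :
    Gr τ z ^ 2 ≤ (((1 + τ) / 2) ^ 2)⁻¹ * ((1 + (τ ^ 2 - z ^ 2)) * Real.sqrt (1 + (τ ^ 2 - z ^ 2)))⁻¹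
      + (((1 + τ) / 2) ^ 3)⁻¹ * (1 + z ^ 2)⁻¹ := by
  have hr : 0 ≤ τ ^ 2 - z ^ 2 := by nlinarith [hz.1, hz.2]
  have e : Gr τ z ^ 2 = (1 + z ^ 2)⁻¹ * ((1 + (τ ^ 2 - z ^ 2)) * Real.sqrt (1 + (τ ^ 2 - z ^ 2)))⁻¹ := by
    unfold Gr
    rw [mul_pow, inv_pow, jap_sq, abs_of_nonneg hr]
    congr 1
    have hb : 0 < 1 + (τ ^ 2 - z ^ 2) := by linarith
    rw [Real.sqrt_eq_rpow, ← Real.rpow_one_add' hb.le (by norm_num), ← Real.rpow_neg hb.le,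
      ← Real.rpow_natCast, ← Real.rpow_mul hb.le]
    norm_num
  rw [e]
  set a := 1 + z ^ 2 with ha
  set b := 1 + (τ ^ 2 - z ^ 2) with hb
  set L := (1 + τ) / 2 with hL
  have hL0 : 0 < L := by positivity
  have ha0 : 0 < a := by positivity
  have hb0 : 0 < b := by linarith
  have hsb : 0 < Real.sqrt b := Real.sqrt_pos.2 hb0
  have hab : 2 * L ^ 2 ≤ a + b := by
    rw [ha, hb, hL]
    nlinarith [sq_nonneg (1 - τ)]
  rcases le_total (L ^ 2) a with h | h
  · have : a⁻¹ ≤ (L ^ 2)⁻¹ := by gcongr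
    have h2 : a⁻¹ * (b * Real.sqrt b)⁻¹ ≤ (L ^ 2)⁻¹ * (b * Real.sqrt b)⁻¹ := by gcongr
    have : 0 ≤ (L ^ 3)⁻¹ * a⁻¹ := by positivity
    linarith
  · have h1 : L ^ 2 ≤ b := by linarith
    have h3 : L ≤ Real.sqrt b := Real.le_sqrt_of_sq_le h1
    have h4 : L ^ 3 ≤ b * Real.sqrt b := by
      calc L ^ 3 = L ^ 2 * L := by ring
        _ ≤ _ := by gcongr
    have h5 : (b * Real.sqrt b)⁻¹ ≤ (L ^ 3)⁻¹ := by gcongr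
    have h6 : a⁻¹ * (b * Real.sqrt b)⁻¹ ≤ a⁻¹ * (L ^ 3)⁻¹ := by gcongr
    have : 0 ≤ (L ^ 2)⁻¹ * (b * Real.sqrt b)⁻¹ := by positivity
    linarith [mul_comm a⁻¹ (L ^ 3)⁻¹]

theorem Gr_int {τ : ℝ} (hτ : 0 ≤ τ) :
    ∫⁻ z in Set.Icc (-τ) τ, ENNReal.ofReal (Gr τ z ^ 2) ≤ ENNReal.ofReal (48 * ((1 + τ) ^ 3)⁻¹) := by
  set f : ℝ → ℝ := fun z => (((1 + τ) / 2) ^ 2)⁻¹ * ((1 + (τ ^ 2 - z ^ 2)) * Real.sqrt (1 + (τ ^ 2 - z ^ 2)))⁻¹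
  set g : ℝ → ℝ := fun z => (((1 + τ) / 2) ^ 3)⁻¹ * (1 + z ^ 2)⁻¹
  have hb : ∀ z ∈ Set.Icc (-τ) τ, 0 < 1 + (τ ^ 2 - z ^ 2) := by
    intro z hz
    nlinarith [hz.1, hz.2]
  have cf : ContinuousOn f (Set.Icc (-τ) τ) := by
    refine ContinuousOn.mul continuousOn_const (ContinuousOn.inv₀ (by fun_prop) ?_)
    intro z hz
    have h0 := hb z hz
    have hs : 0 < Real.sqrt (1 + (τ ^ 2 - z ^ 2)) := Real.sqrt_pos.2 h0
    positivity
  have cg : Continuous g :=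
    continuous_const.mul (Continuous.inv₀ (by fun_prop) fun z => by positivity)
  have hle : -τ ≤ τ := by linarith
  have cfu : ContinuousOn f (Set.uIcc (-τ) τ) := by rwa [Set.uIcc_of_le hle]
  have nn : ∀ z ∈ Set.Icc (-τ) τ, 0 ≤ f z + g z := by
    intro z hz
    exact (sq_nonneg _).trans (Gr_sq_le hτ hz)
  calc _ ≤ ∫⁻ z in Set.Icc (-τ) τ, ENNReal.ofReal (f z + g z) := by
        apply setLIntegral_mono' measurableSet_Icc
        intro z hz
        exact ENNReal.ofReal_le_ofReal (Gr_sq_le hτ hz)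
    _ = ENNReal.ofReal (∫ z in Set.Icc (-τ) τ, (f z + g z)) := by
        rw [ofReal_integral_eq_lintegral_ofReal]
        · exact (cf.add cg.continuousOn).integrableOn_Icc
        · filter_upwards [ae_restrict_mem measurableSet_Icc] with z hz using nn z hz
    _ ≤ _ := by
        apply ENNReal.ofReal_le_ofReal
        rw [integral_Icc_eq_integral_Ioc, ← intervalIntegral.integral_of_le hle,
          intervalIntegral.integral_add cfu.intervalIntegrable (cg.intervalIntegrable _ _)]
        simp only [f, g]
        rw [intervalIntegral.integral_const_mul, intervalIntegral.integral_const_mul, int_b]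
        have i1 := int_inv_le (-τ) τ 0
        simp only [zero_sub, neg_sq] at i1
        have i2 : 2 * τ / (1 + τ ^ 2) ≤ 2 / ((1 + τ) / 2) := by
          rw [div_le_div_iff₀ (by positivity) (by positivity)]
          nlinarith [sq_nonneg (1 - τ)]
        set L := (1 + τ) / 2 with hL
        have hL0 : 0 < L := by positivity
        have hL1 : 1 + τ = 2 * L := by rw [hL]; ring
        calc (L ^ 2)⁻¹ * (2 * τ / (1 + τ ^ 2)) + (L ^ 3)⁻¹ * ∫ (z : ℝ) in -τ..τ, (1 + z ^ 2)⁻¹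
            ≤ (L ^ 2)⁻¹ * (2 / L) + (L ^ 3)⁻¹ * 4 := by
              gcongr
              linarith [Real.pi_lt_four]
          _ = 48 * ((1 + τ) ^ 3)⁻¹ := by
              rw [hL1]
              field_simp
              norm_num

noncomputable def GG (t s z : ℝ) : ENNReal :=
  ({p : ℝ × ℝ | p.2 ∈ Set.Icc (-(t - p.1)) (t - p.1)}).indicator
    (fun p => ENNReal.ofReal (Gr (t - p.1) p.2)) (s, z)

theorem GG_meas (t : ℝ) : Measurable (fun p : ℝ × ℝ => GG t p.1 p.2) := by
  unfold GG
  refine Measurable.indicator ?_ ?_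
  · apply ENNReal.measurable_ofReal.comp
    have : Continuous (fun p : ℝ × ℝ => Gr (t - p.1) p.2) :=
      Gr_cont.comp (f := fun p : ℝ × ℝ => ((t - p.1, p.2) : ℝ × ℝ)) (by fun_prop)
    exact this.measurable
  · simp only [Set.mem_Icc, Set.ofPred_and]
    exact (measurableSet_le (by fun_prop) (by fun_prop)).inter
      (measurableSet_le (by fun_prop) (by fun_prop))

theorem GG_sq {t s : ℝ} (hs : s ≤ t) :
    ∫⁻ z, GG t s z ^ 2 ≤ ENNReal.ofReal (48 * ((1 + (t - s)) ^ 3)⁻¹) := by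
  refine le_trans (le_of_eq ?_) (Gr_int (τ := t - s) (by linarith))
  rw [← lintegral_indicator measurableSet_Icc]
  congr 1
  ext z
  unfold GG
  by_cases hz : z ∈ Set.Icc (-(t - s)) (t - s)
  · rw [Set.indicator_of_mem hz, Set.indicator_of_mem (by exact hz),
      ENNReal.ofReal_pow (Gr_nonneg _ _)]
  · rw [Set.indicator_of_notMem hz, Set.indicator_of_notMem (by exact hz)]
    simp

noncomputable def phi (y : ℝ) : ENNReal := ENNReal.ofReal ((1 + y ^ 2)⁻¹)

theorem phi_meas : Measurable phi := by unfold phi; fun_prop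

theorem phi_int1 (c : ℝ) : ∫⁻ x, phi (x - c) = ENNReal.ofReal Real.pi := lint_inv c

theorem phi_int2 (c : ℝ) : ∫⁻ x, phi (c - x) = ENNReal.ofReal Real.pi := by
  rw [← phi_int1 c]
  congr 1
  ext x
  unfold phi
  congr 3
  ring

theorem phi_ne_zero (y : ℝ) : phi y ≠ 0 := by
  unfold phi
  have : 0 < (1 + y ^ 2)⁻¹ := by positivity
  simpa using this

theorem phi_ne_top (y : ℝ) : phi y ≠ ⊤ := ENNReal.ofReal_ne_top

theorem phi_le_one (y : ℝ) : phi y ≤ 1 := by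
  unfold phi
  rw [ENNReal.ofReal_le_one]
  apply inv_le_one_of_one_le₀
  nlinarith [sq_nonneg y]

noncomputable def II (t s x : ℝ) : ENNReal := ∫⁻ z, GG t s z * phi (x - z)

theorem II_meas (t : ℝ) : Measurable (fun p : ℝ × ℝ => II t p.1 p.2) := by
  unfold II
  have : Measurable (Function.uncurry fun (p : ℝ × ℝ) (z : ℝ) => GG t p.1 z * phi (p.2 - z)) := by
    refine Measurable.mul ?_ ?_
    · exact (GG_meas t).comp (g := fun p : ℝ × ℝ => GG t p.1 p.2)
        (f := fun q : (ℝ × ℝ) × ℝ => ((q.1.1, q.2) : ℝ × ℝ)) (by fun_prop)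
    · exact phi_meas.comp (by fun_prop)
  exact this.lintegral_prod_right

theorem II_sq {t s : ℝ} (hs : s ≤ t) :
    ∫⁻ x, II t s x ^ 2 ≤ ENNReal.ofReal (48 * Real.pi ^ 2 * ((1 + (t - s)) ^ 3)⁻¹) := by
  have gm : Measurable (GG t s) := (GG_meas t).comp (g := fun p : ℝ × ℝ => GG t p.1 p.2)
        (f := fun z : ℝ => ((s, z) : ℝ × ℝ)) (by fun_prop)
  have pm : ∀ x, Measurable (fun z => phi (x - z)) := fun x => phi_meas.comp (by fun_prop)
  have hm : Measurable (Function.uncurry fun x z : ℝ => GG t s z ^ 2 * phi (x - z)) := by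
    refine Measurable.mul ?_ ?_
    · exact (gm.comp measurable_snd).pow_const 2
    · exact phi_meas.comp (by fun_prop)
  calc ∫⁻ x, II t s x ^ 2 ≤ ∫⁻ x, ENNReal.ofReal Real.pi * ∫⁻ z, GG t s z ^ 2 * phi (x - z) := by
        apply lintegral_mono
        intro x
        have := cs_w volume (fun z => GG t s z * phi (x - z)) (fun z => phi (x - z))
          (gm.mul (pm x)).aemeasurable (pm x).aemeasurable
          (Filter.Eventually.of_forall fun z => phi_ne_zero _)
          (Filter.Eventually.of_forall fun z => phi_ne_top _)
        rw [phi_int2] at this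
        refine this.trans (le_of_eq ?_)
        congr 2
        ext z
        rw [mul_pow, mul_div_assoc, sq (phi _), mul_div_assoc,
          ENNReal.div_self (phi_ne_zero _) (phi_ne_top _), mul_one]
    _ = ENNReal.ofReal Real.pi * ∫⁻ x, ∫⁻ z, GG t s z ^ 2 * phi (x - z) :=
        lintegral_const_mul _ (Measurable.lintegral_prod_right hm)
    _ = ENNReal.ofReal Real.pi * ∫⁻ z, ∫⁻ x, GG t s z ^ 2 * phi (x - z) := by
        rw [lintegral_lintegral_swap hm.aemeasurable]
    _ = ENNReal.ofReal Real.pi * ((∫⁻ z, GG t s z ^ 2) * ENNReal.ofReal Real.pi) := by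
        congr 1
        rw [← lintegral_mul_const _ (gm.pow_const 2)]
        congr 1
        ext z
        have pm2 : Measurable (fun x => phi (x - z)) := phi_meas.comp (by fun_prop)
        rw [lintegral_const_mul _ pm2, phi_int1]
    _ ≤ ENNReal.ofReal Real.pi * (ENNReal.ofReal (48 * ((1 + (t - s)) ^ 3)⁻¹) * ENNReal.ofReal Real.pi) := by
        gcongr
        exact GG_sq hs
    _ = _ := by
        have : 0 ≤ 1 + (t - s) := by linarith
        rw [← ENNReal.ofReal_mul (by positivity), ← ENNReal.ofReal_mul (by positivity)]
        congr 1
        ring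
open MeasureTheory

noncomputable def FF (t c s x : ℝ) : ENNReal :=
  ENNReal.ofReal (s ^ (-(3/2) : ℝ)) *
    (ENNReal.ofReal (2 * (1 + (t - s) ^ 2)⁻¹) * phi (x - (-(t - s)))
      + ENNReal.ofReal (2 * (1 + (t - s) ^ 2)⁻¹) * phi (x - (t - s))
      + ENNReal.ofReal c * II t s x)

theorem FF_meas (t c : ℝ) : Measurable (Function.uncurry (FF t c)) := by
  have h1 : Measurable (fun p : ℝ × ℝ => phi (p.2 - (-(t - p.1)))) := phi_meas.comp (by fun_prop)
  have h2 : Measurable (fun p : ℝ × ℝ => phi (p.2 - (t - p.1))) := phi_meas.comp (by fun_prop)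
  have h3 : Measurable (fun p : ℝ × ℝ => ENNReal.ofReal (2 * (1 + (t - p.1) ^ 2)⁻¹)) := by fun_prop
  have h4 : Measurable (fun p : ℝ × ℝ => ENNReal.ofReal (p.1 ^ (-(3/2) : ℝ))) := by fun_prop
  exact h4.mul (((h3.mul h1).add (h3.mul h2)).add (measurable_const.mul (II_meas t)))

theorem bdry_sq {τ : ℝ} (hτ : 0 ≤ τ) (c : ℝ) :
    ∫⁻ x, (ENNReal.ofReal (2 * (1 + τ ^ 2)⁻¹) * phi (x - c)) ^ 2
      ≤ ENNReal.ofReal (16 * Real.pi * ((1 + τ) ^ 3)⁻¹) := by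
  have pm : Measurable (fun x => phi (x - c)) := phi_meas.comp (by fun_prop)
  calc _ ≤ ∫⁻ x, ENNReal.ofReal (2 * (1 + τ ^ 2)⁻¹) ^ 2 * phi (x - c) := by
        apply lintegral_mono
        intro x
        simp only
        rw [mul_pow]
        gcongr
        calc phi (x - c) ^ 2 = phi (x - c) * phi (x - c) := sq _
          _ ≤ phi (x - c) * 1 := by gcongr; exact phi_le_one _
          _ = _ := mul_one _
    _ = ENNReal.ofReal ((2 * (1 + τ ^ 2)⁻¹) ^ 2 * Real.pi) := by
        rw [lintegral_const_mul _ pm, phi_int1, ← ENNReal.ofReal_pow (by positivity),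
          ← ENNReal.ofReal_mul (by positivity)]
    _ ≤ _ := by
        apply ENNReal.ofReal_le_ofReal
        have h1 : (2 * (1 + τ ^ 2)⁻¹) ≤ 4 * ((1 + τ) ^ 2)⁻¹ := by
          rw [← div_eq_mul_inv, ← div_eq_mul_inv, div_le_div_iff₀ (by positivity) (by positivity)]
          nlinarith [sq_nonneg (1 - τ)]
        have h2 : (1 + τ) ^ 3 ≤ (1 + τ) ^ 4 := pow_le_pow_right₀ (by linarith) (by norm_num)
        have h3 : ((1 + τ) ^ 4)⁻¹ ≤ ((1 + τ) ^ 3)⁻¹ := by gcongr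
        calc (2 * (1 + τ ^ 2)⁻¹) ^ 2 * Real.pi ≤ (4 * ((1 + τ) ^ 2)⁻¹) ^ 2 * Real.pi := by gcongr
          _ = 16 * Real.pi * ((1 + τ) ^ 4)⁻¹ := by
              rw [mul_pow, inv_pow, ← pow_mul]; ring
          _ ≤ _ := by gcongr

theorem FF_sq {c : ℝ} (hc : 0 < c) {t s : ℝ} (h1 : 1 ≤ s) (hs : s ≤ t) :
    ∫⁻ x, FF t c s x ^ 2 ≤ ENNReal.ofReal (Real.sqrt (9 * (32 * Real.pi + 48 * c ^ 2 * Real.pi ^ 2)) *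
      (s ^ (-(3/2) : ℝ) * (1 + (t - s)) ^ (-(3/2) : ℝ))) ^ 2 := by
  have hτ : 0 ≤ t - s := by linarith
  have pm1 : Measurable (fun x => (ENNReal.ofReal (2 * (1 + (t - s) ^ 2)⁻¹) * phi (x - (-(t - s)))) ^ 2) :=
    ((phi_meas.comp (by fun_prop : Measurable fun x : ℝ => x - (-(t - s)))).const_mul _).pow_const 2
  have pm2 : Measurable (fun x => (ENNReal.ofReal (2 * (1 + (t - s) ^ 2)⁻¹) * phi (x - (t - s))) ^ 2) :=
    ((phi_meas.comp (by fun_prop : Measurable fun x : ℝ => x - (t - s))).const_mul _).pow_const 2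
  have im : Measurable (II t s) := (II_meas t).comp (g := fun p : ℝ × ℝ => II t p.1 p.2)
    (f := fun z : ℝ => ((s, z) : ℝ × ℝ)) (by fun_prop)
  have pm3 : Measurable (fun x => (ENNReal.ofReal c * II t s x) ^ 2) := (im.const_mul _).pow_const 2
  set k := ENNReal.ofReal (s ^ (-(3/2) : ℝ)) with hk
  calc ∫⁻ x, FF t c s x ^ 2 ≤ ∫⁻ x, (k ^ 2 * 9) *
        ((ENNReal.ofReal (2 * (1 + (t - s) ^ 2)⁻¹) * phi (x - (-(t - s)))) ^ 2
        + (ENNReal.ofReal (2 * (1 + (t - s) ^ 2)⁻¹) * phi (x - (t - s))) ^ 2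
        + (ENNReal.ofReal c * II t s x) ^ 2) := by
        apply lintegral_mono
        intro x
        unfold FF
        simp only
        rw [mul_pow, mul_assoc]
        gcongr
        exact three_sq _ _ _
    _ = (k ^ 2 * 9) * ((∫⁻ x, (ENNReal.ofReal (2 * (1 + (t - s) ^ 2)⁻¹) * phi (x - (-(t - s)))) ^ 2)
        + (∫⁻ x, (ENNReal.ofReal (2 * (1 + (t - s) ^ 2)⁻¹) * phi (x - (t - s))) ^ 2)
        + ENNReal.ofReal c ^ 2 * ∫⁻ x, II t s x ^ 2) := by
        rw [lintegral_const_mul' _ _ (ENNReal.mul_ne_top (by simp [hk]) (by norm_num)),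
          lintegral_add_right _ pm3,
          lintegral_add_left pm1]
        simp only [mul_pow (ENNReal.ofReal c)]
        rw [lintegral_const_mul _ (im.pow_const 2)]
    _ ≤ (k ^ 2 * 9) * (ENNReal.ofReal (16 * Real.pi * ((1 + (t - s)) ^ 3)⁻¹)
        + ENNReal.ofReal (16 * Real.pi * ((1 + (t - s)) ^ 3)⁻¹)
        + ENNReal.ofReal c ^ 2 * ENNReal.ofReal (48 * Real.pi ^ 2 * ((1 + (t - s)) ^ 3)⁻¹)) := by
        gcongr
        · exact bdry_sq hτ _
        · exact bdry_sq hτ _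
        · exact II_sq hs
    _ = _ := by
        have e9 : (9 : ENNReal) = ENNReal.ofReal 9 := by norm_num
        have ps : 0 ≤ s ^ (-(3/2) : ℝ) := by positivity
        have pτ : 0 ≤ (1 + (t - s)) ^ (-(3/2) : ℝ) := by positivity
        rw [hk, e9, ← ENNReal.ofReal_pow ps, ← ENNReal.ofReal_pow hc.le,
          ← ENNReal.ofReal_mul (by positivity), ← ENNReal.ofReal_mul (by positivity),
          ← ENNReal.ofReal_add (by positivity) (by positivity),
          ← ENNReal.ofReal_add (by positivity) (by positivity),
          ← ENNReal.ofReal_mul (by positivity), ← ENNReal.ofReal_pow (by positivity)]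
        congr 1
        rw [mul_pow, Real.sq_sqrt (by positivity), mul_pow]
        have e : ((1 + (t - s)) ^ (-(3/2) : ℝ)) ^ 2 = ((1 + (t - s)) ^ 3)⁻¹ := by
          rw [← Real.rpow_natCast, ← Real.rpow_mul (by linarith), ← Real.rpow_natCast,
            ← Real.rpow_neg (by linarith)]
          norm_num
        rw [e]
        ring

theorem enorm_le_ofReal {a b : ℝ} (h : |a| ≤ b) : ‖a‖ₑ ≤ ENNReal.ofReal b := by
  rw [← ofReal_norm]
  exact ENNReal.ofReal_le_ofReal h

theorem DU_bound {Cb : ℝ} (hCb : 0 < Cb)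
    (hbes : ∀ r : ℝ, 0 ≤ r → |bes 1 r| ≤ Cb * (1 + r) ^ (-(3/4) : ℝ))
    (h : ℝ → ℝ → ℝ) (K t R : ℝ) (hK : 0 ≤ K) (ht : 1 ≤ t)
    (hh : ∀ s ∈ Set.Icc 1 t, ∀ y, s ^ 2 - y ^ 2 ≤ R ^ 2 →
      |h s y| ≤ K * s ^ (-(3/2) : ℝ) * ((1 + y ^ 2) ^ 2)⁻¹) (x : ℝ) (hx : t ^ 2 - x ^ 2 ≤ R ^ 2) :
    ‖(1 + x ^ 2)⁻¹ * DU h t x‖ₑ ≤ ENNReal.ofReal K * ∫⁻ s in Set.Ioc 1 t, FF t Cb s x := by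
  rw [← lintegral_const_mul' _ _ ENNReal.ofReal_ne_top]
  unfold DU
  rw [← intervalIntegral.integral_const_mul, intervalIntegral.integral_of_le ht]
  refine (enorm_integral_le_lintegral_enorm _).trans ?_
  apply setLIntegral_mono' measurableSet_Ioc
  intro s hs
  have hs' : s ∈ Set.Icc 1 t := ⟨hs.1.le, hs.2⟩
  have hs1 : 1 ≤ s := hs.1.le
  have hτ : 0 ≤ t - s := by linarith [hs.2]
  have ps : 0 ≤ s ^ (-(3/2) : ℝ) := by positivity
  have B : ∀ z ∈ Set.Icc (-(t - s)) (t - s), (1 + x ^ 2)⁻¹ * |h s (x - z)|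
      ≤ K * s ^ (-(3/2) : ℝ) * (2 * (1 + z ^ 2)⁻¹ * (1 + (x - z) ^ 2)⁻¹) := by
    intro z hz
    have a3 := hh s hs' (x - z) (past hx (by linarith) hz)
    calc (1 + x ^ 2)⁻¹ * |h s (x - z)| ≤ (1 + x ^ 2)⁻¹ *
          (K * s ^ (-(3/2) : ℝ) * ((1 + (x - z) ^ 2) ^ 2)⁻¹) := by gcongr
      _ = K * s ^ (-(3/2) : ℝ) * ((1 + x ^ 2)⁻¹ * ((1 + (x - z) ^ 2) ^ 2)⁻¹) := by ring
      _ ≤ _ := by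
        gcongr ?_ * ?_
        exact jap_prod2 x z
  have T1 : ∀ z ∈ Set.Icc (-(t - s)) (t - s), z ^ 2 = (t - s) ^ 2 →
      ‖(1 + x ^ 2)⁻¹ * h s (x - z)‖ₑ ≤ ENNReal.ofReal K * (ENNReal.ofReal (s ^ (-(3/2) : ℝ)) *
        (ENNReal.ofReal (2 * (1 + (t - s) ^ 2)⁻¹) * phi (x - z))) := by
    intro z hz hz2
    unfold phi
    rw [← ENNReal.ofReal_mul (by positivity), ← ENNReal.ofReal_mul (by positivity),
      ← ENNReal.ofReal_mul (by positivity)]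
    apply enorm_le_ofReal
    rw [abs_mul, abs_of_pos (by positivity : 0 < (1 + x ^ 2)⁻¹)]
    refine (B z hz).trans (le_of_eq ?_)
    rw [hz2]
    ring
  have T2 : ‖(1 + x ^ 2)⁻¹ * ∫ z in (-(t - s))..(t - s),
      z / 2 * bes 1 ((t - s) ^ 2 - z ^ 2) * h s (x - z)‖ₑ
      ≤ ENNReal.ofReal K * (ENNReal.ofReal (s ^ (-(3/2) : ℝ)) * (ENNReal.ofReal Cb * II t s x)) := by
    unfold II
    rw [← lintegral_const_mul' _ _ ENNReal.ofReal_ne_top,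
      ← lintegral_const_mul' _ _ ENNReal.ofReal_ne_top,
      ← lintegral_const_mul' _ _ ENNReal.ofReal_ne_top, ← intervalIntegral.integral_const_mul,
      intervalIntegral.integral_of_le (by linarith)]
    refine (enorm_integral_le_lintegral_enorm _).trans ?_
    refine le_trans ?_ (setLIntegral_le_lintegral (Set.Ioc (-(t - s)) (t - s)) _)
    apply setLIntegral_mono' measurableSet_Ioc
    intro z hz
    have hz' : z ∈ Set.Icc (-(t - s)) (t - s) := ⟨hz.1.le, hz.2⟩
    have hr : 0 ≤ (t - s) ^ 2 - z ^ 2 := by nlinarith [hz'.1, hz'.2]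
    have eG : GG t s z = ENNReal.ofReal (Gr (t - s) z) := by
      unfold GG
      rw [Set.indicator_of_mem (by exact hz')]
    have hG := Gr_nonneg (t - s) z
    rw [eG]
    unfold phi
    rw [← ENNReal.ofReal_mul hG, ← ENNReal.ofReal_mul hCb.le, ← ENNReal.ofReal_mul ps,
      ← ENNReal.ofReal_mul hK]
    apply enorm_le_ofReal
    have a1 := hbes _ hr
    have a2 := B z hz'
    have hj := jap_pos z
    have hzj : |z| ≤ jap z := by
      unfold jap
      apply Real.abs_le_sqrt
      linarith
    have a3 : |z| * (1 + z ^ 2)⁻¹ ≤ (jap z)⁻¹ := by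
      rw [← jap_sq, ← div_eq_mul_inv, inv_eq_one_div, div_le_div_iff₀ (by positivity) hj]
      nlinarith
    have pr : 0 ≤ (1 + ((t - s) ^ 2 - z ^ 2)) ^ (-(3/4) : ℝ) := by positivity
    calc |(1 + x ^ 2)⁻¹ * (z / 2 * bes 1 ((t - s) ^ 2 - z ^ 2) * h s (x - z))|
        = |z| / 2 * |bes 1 ((t - s) ^ 2 - z ^ 2)| * ((1 + x ^ 2)⁻¹ * |h s (x - z)|) := by
          rw [abs_mul, abs_mul, abs_mul, abs_div, abs_of_pos (by positivity : 0 < (1 + x ^ 2)⁻¹),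
            abs_of_pos (by norm_num : (0:ℝ) < 2)]
          ring
      _ ≤ |z| / 2 * (Cb * (1 + ((t - s) ^ 2 - z ^ 2)) ^ (-(3/4) : ℝ)) *
          (K * s ^ (-(3/2) : ℝ) * (2 * (1 + z ^ 2)⁻¹ * (1 + (x - z) ^ 2)⁻¹)) := by gcongr
      _ = (|z| * (1 + z ^ 2)⁻¹) * (K * s ^ (-(3/2) : ℝ) * Cb * (1 + ((t - s) ^ 2 - z ^ 2)) ^ (-(3/4) : ℝ)
          * (1 + (x - z) ^ 2)⁻¹) := by ring
      _ ≤ (jap z)⁻¹ * (K * s ^ (-(3/2) : ℝ) * Cb * (1 + ((t - s) ^ 2 - z ^ 2)) ^ (-(3/4) : ℝ)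
          * (1 + (x - z) ^ 2)⁻¹) := by gcongr
      _ = _ := by
          unfold Gr
          rw [abs_of_nonneg hr]
          ring
  have t1 := T1 (-(t - s)) ⟨le_rfl, by linarith⟩ (by ring)
  have t2 := T1 (t - s) ⟨by linarith, le_rfl⟩ rfl
  rw [sub_neg_eq_add] at t1
  unfold FF
  simp only [mul_add (ENNReal.ofReal _), sub_neg_eq_add]
  refine le_trans ?_ (add_le_add (add_le_add t1 t2) T2)
  have half : ∀ a : ℝ, ‖1 / 2 * a‖ₑ ≤ ‖a‖ₑ := by
    intro a
    rw [← ofReal_norm a]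
    apply enorm_le_ofReal
    rw [abs_mul, abs_of_pos (by norm_num : (0:ℝ) < 1 / 2), Real.norm_eq_abs]
    linarith [abs_nonneg a]
  rw [mul_left_comm]
  refine (half _).trans ?_
  rw [mul_add, mul_sub]
  refine (enorm_add_le _ _).trans ?_
  gcongr
  exact enorm_sub_le

theorem est2 : ∃ C > (0:ℝ), ∀ (h : ℝ → ℝ → ℝ) (K t R : ℝ), 0 ≤ K → 1 ≤ t →
    (∀ s ∈ Set.Icc 1 t, ∀ y, s ^ 2 - y ^ 2 ≤ R ^ 2 →
      |h s y| ≤ K * s ^ (-(3/2) : ℝ) * ((1 + y ^ 2) ^ 2)⁻¹) →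
    wL2 t R (DU h t) ≤ C * K * t ^ (-(3/2) : ℝ) := by
  obtain ⟨Cb, hCb, hbes⟩ := bes_decay
  set D := Real.sqrt (9 * (32 * Real.pi + 48 * Cb ^ 2 * Real.pi ^ 2)) with hD
  have hD0 : 0 < D := Real.sqrt_pos.2 (by positivity)
  refine ⟨16 * D, by positivity, ?_⟩
  intro h K t R hK ht hh
  set w : ℝ → ℝ := fun s => D * (s ^ (-(3/2) : ℝ) * (1 + (t - s)) ^ (-(3/2) : ℝ)) with hw
  have wpos : ∀ s ∈ Set.Ioc 1 t, 0 < w s := by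
    intro s hs
    have h1 : 0 < s := by linarith [hs.1]
    have h2 : 0 < 1 + (t - s) := by linarith [hs.2]
    positivity
  have wint : ∫⁻ s in Set.Ioc 1 t, ENNReal.ofReal (w s) ≤ ENNReal.ofReal (16 * D * t ^ (-(3/2) : ℝ)) := by
    rw [← ofReal_integral_eq_lintegral_ofReal]
    · apply ENNReal.ofReal_le_ofReal
      rw [← intervalIntegral.integral_of_le ht, hw, intervalIntegral.integral_const_mul]
      have := mul_le_mul_of_nonneg_left (time2 ht) hD0.le
      linarith
    · have c0 : ContinuousOn w (Set.uIcc 1 t) :=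
        continuousOn_const.mul ((cont_s ht _).mul (cont_τ ht _))
      have := c0.intervalIntegrable (μ := volume)
      rwa [intervalIntegrable_iff_integrableOn_Ioc_of_le ht] at this
    · filter_upwards [ae_restrict_mem measurableSet_Ioc] with s hs using (wpos s hs).le
  have M := mink (volume.restrict (Set.Ioc 1 t)) (FF t Cb) (fun s => ENNReal.ofReal (w s))
    (FF_meas t Cb) (by rw [hw]; fun_prop)
    (by
      filter_upwards [ae_restrict_mem measurableSet_Ioc] with s hs
      simpa using wpos s hs)
    (Filter.Eventually.of_forall fun s => ENNReal.ofReal_ne_top)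
    (by
      filter_upwards [ae_restrict_mem measurableSet_Ioc] with s hs
      exact FF_sq hCb hs.1.le hs.2)
  apply wL2_le _ _ _ (by positivity)
  have hS : MeasurableSet {x : ℝ | t ^ 2 - x ^ 2 ≤ R ^ 2} :=
    measurableSet_le (by fun_prop) (by fun_prop)
  calc _ ≤ ∫⁻ x in {x : ℝ | t ^ 2 - x ^ 2 ≤ R ^ 2},
        ENNReal.ofReal K ^ 2 * (∫⁻ s in Set.Ioc 1 t, FF t Cb s x) ^ 2 := by
        apply setLIntegral_mono' hS
        intro x hx
        have := DU_bound hCb (fun r hr => (hbes r hr).2) h K t R hK ht hh x hx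
        rw [← mul_pow, ENNReal.ofReal_pow (by positivity)]
        gcongr
        refine le_trans (le_of_eq ?_) this
        rw [← ofReal_norm, Real.norm_eq_abs, abs_mul,
          abs_of_pos (by positivity : 0 < (1 + x ^ 2)⁻¹)]
    _ ≤ ∫⁻ x, ENNReal.ofReal K ^ 2 * (∫⁻ s in Set.Ioc 1 t, FF t Cb s x) ^ 2 :=
        setLIntegral_le_lintegral _ _
    _ = ENNReal.ofReal K ^ 2 * ∫⁻ x, (∫⁻ s in Set.Ioc 1 t, FF t Cb s x) ^ 2 :=
        lintegral_const_mul' _ _ (by simp)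
    _ ≤ ENNReal.ofReal K ^ 2 * ENNReal.ofReal (16 * D * t ^ (-(3/2) : ℝ)) ^ 2 := by
        gcongr
        refine M.trans ?_
        gcongr
    _ = _ := by
        rw [← mul_pow, ← ENNReal.ofReal_mul hK, ← ENNReal.ofReal_pow (by positivity)]
        congr 2
        ring
open MeasureTheory

theorem beta_decay (β : SchwartzMap ℝ ℝ) : ∃ B > (0:ℝ), ∀ y, |β y| ≤ B * ((1 + y ^ 2) ^ 2)⁻¹ := by
  obtain ⟨A, hA0, hA⟩ := β.decay 0 0
  obtain ⟨D, hD0, hD⟩ := β.decay 4 0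
  refine ⟨2 * (A + D), by positivity, fun y => ?_⟩
  have h1 := hA y
  have h2 := hD y
  simp only [norm_iteratedFDeriv_zero, pow_zero, one_mul, Real.norm_eq_abs] at h1 h2
  rw [← div_eq_mul_inv, le_div_iff₀ (by positivity)]
  have e : |y| ^ 4 = y ^ 4 := by
    rw [show (4:ℕ) = 2 * 2 by norm_num, pow_mul, pow_mul, sq_abs]
  rw [e] at h2
  have h3 : (1 + y ^ 2) ^ 2 ≤ 2 * (1 + y ^ 4) := by nlinarith [sq_nonneg (1 - y ^ 2)]
  have := mul_le_mul_of_nonneg_left h3 (abs_nonneg (β y))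
  linarith

theorem weighted_energy_estimates_u1 (β₀ : ℝ) (β : SchwartzMap ℝ ℝ) (N : ℕ) (hN : 2 ≤ N) :
    ∃ C > (0 : ℝ),
      ∀ C₀ : ℝ, 1 ≤ C₀ → ∃ ε₀ > (0 : ℝ), ∀ R : ℝ, 1 ≤ R →
      ∀ (f g : ℝ → ℝ) (u : ℝ → ℝ → ℝ),
        ContDiff ℝ (⊤ : ℕ∞) f → ContDiff ℝ (⊤ : ℕ∞) g →
        ContDiffOn ℝ (⊤ : ℕ∞) (fun p : ℝ × ℝ => u p.1 p.2) {p : ℝ × ℝ | 1 ≤ p.1} →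
        (∀ t x : ℝ, 1 ≤ t →
          pt (pt u) t x - px (px u) t x + u t x
            = β₀ * (u t x) ^ 3 + β x * (u t x) ^ 3) →
        (∀ x : ℝ, u 1 x = f x) →
        (∀ x : ℝ, pt u 1 x = g x) →
        epsN N f g ≤ ε₀ →
        (∀ t x : ℝ, 1 ≤ t → t ^ 2 - x ^ 2 ≤ R ^ 2 →
          Real.sqrt t * |u t x| ≤ 2 * C₀ * epsN N f g) →
        ∀ t : ℝ, 1 ≤ t →
          wL2 t R (fun x => u1 (fun z => β z) u t x)
              ≤ C * (2 * C₀ * epsN N f g) ^ 3 * t ^ (-(1 : ℝ) / 2) ∧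
          wL2 t R (fun x => px (u1 (fun z => β z) u) t x)
              ≤ C * (2 * C₀ * epsN N f g) ^ 3 * t ^ (-(3 : ℝ) / 2) := by
  obtain ⟨B, hB0, hB⟩ := beta_decay β
  obtain ⟨C1, hC1, E1⟩ := est1
  obtain ⟨C2, hC2, E2⟩ := est2
  refine ⟨(C1 + C2) * B, by positivity, fun C₀ _ => ⟨1, one_pos, ?_⟩⟩
  intro R _ f g u _ _ hu _ _ _ _ hdec t ht
  set δ := 2 * C₀ * epsN N f g with hδ
  have hδ0 : 0 ≤ δ := by
    have := hdec 1 1 le_rfl (by nlinarith [sq_nonneg R])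
    exact le_trans (by positivity) this
  obtain ⟨h, h', hc, hc', hd, he⟩ := hext β u hu
  have ud : ∀ s y, 1 ≤ s → s ^ 2 - y ^ 2 ≤ R ^ 2 → |u s y| ≤ δ * s ^ (-(1/2) : ℝ) := by
    intro s y hs hy
    have h1 := hdec s y hs hy
    have h2 : 0 < Real.sqrt s := Real.sqrt_pos.2 (by linarith)
    rw [Real.rpow_neg (by linarith), ← Real.sqrt_eq_rpow, ← div_eq_mul_inv, le_div_iff₀ h2]
    linarith
  have hb : ∀ s, 1 ≤ s → ∃ M, ∀ y, |u s y| ≤ M := by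
    intro s hs
    have cu : Continuous (fun y => u s y) := by
      exact hu.continuousOn.comp_continuous (f := fun y : ℝ => ((s, y) : ℝ × ℝ)) (by fun_prop)
        (fun y => hs)
    obtain ⟨M, hM⟩ := (isCompact_Icc (a := -s) (b := s)).exists_bound_of_continuousOn cu.continuousOn
    refine ⟨max M (δ * s ^ (-(1/2) : ℝ)), fun y => ?_⟩
    by_cases hy : y ∈ Set.Icc (-s) s
    · exact (hM y hy).trans (le_max_left _ _)
    · refine (ud s y hs ?_).trans (le_max_right _ _)
      have : s ≤ |y| := by
        by_contra hcon
        push Not at hcon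
        exact hy ⟨(abs_lt.1 hcon).1.le, (abs_lt.1 hcon).2.le⟩
      have : s ^ 2 ≤ y ^ 2 := by rw [← sq_abs y]; gcongr
      nlinarith [sq_nonneg R]
  have hh : ∀ s ∈ Set.Icc 1 t, ∀ y, s ^ 2 - y ^ 2 ≤ R ^ 2 →
      |h s y| ≤ (B * δ ^ 3) * s ^ (-(3/2) : ℝ) * ((1 + y ^ 2) ^ 2)⁻¹ := by
    intro s hs y hy
    have hs1 := hs.1
    rw [he s hs1, abs_mul, abs_pow]
    calc |β y| * |u s y| ^ 3 ≤ (B * ((1 + y ^ 2) ^ 2)⁻¹) * (δ * s ^ (-(1/2) : ℝ)) ^ 3 := by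
          gcongr
          · exact hB y
          · exact ud s y hs1 hy
      _ = _ := by
          have : (s ^ (-(1/2) : ℝ)) ^ 3 = s ^ (-(3/2) : ℝ) := by
            rw [← Real.rpow_natCast, ← Real.rpow_mul (by linarith)]
            norm_num
          rw [mul_pow, this]
          ring
  have eq1 : (fun x => u1 (fun z => β z) u t x) = UU h t := by
    ext x
    exact u1_eq β u h hc he hb t x ht
  have eq2 : (fun x => px (u1 (fun z => β z) u) t x) = DU h t := by
    ext x
    unfold px
    rw [eq1]
    exact (UU_deriv h h' hc hc' hd t x).deriv
  have hK : 0 ≤ B * δ ^ 3 := by positivity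
  have r1 := E1 h _ t R hK ht hh
  have r2 := E2 h _ t R hK ht hh
  rw [eq1, eq2]
  have p1 : 0 ≤ t ^ (-(1/2) : ℝ) := by positivity
  have p2 : 0 ≤ t ^ (-(3/2) : ℝ) := by positivity
  have q1 := mul_nonneg (mul_nonneg hC2.le hK) p1
  have q2 := mul_nonneg (mul_nonneg hC1.le hK) p2
  constructor
  · rw [show (-(1:ℝ)/2) = -(1/2) by ring]
    nlinarith
  · rw [show (-(3:ℝ)/2) = -(3/2) by ring]
    nlinarith
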